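/- arXiv:2511.04891 — 3 statements merged into one kernel-verified Lean document; each statement's English description precedes it below -/
import Mathlib

section
/- For any number n of agents with additive utilities over a finite set M of indivisible items (where each item may be a good for some agents and a chore for others) and with utilities over the cake C = [0,1] given by nonnegative integrable density functions, there exists an allocation {(A_i, C_i)}_{i∈N} — where (A_1,…,A_n) is a partition of M and (C_1,…,C_n) is a partition of [0,1] into measurable sets — that is envy-free for mixed resources (EFM). -/
open MeasureTheory

namespace EFM

open scoped Classical in
/-- value for agent `i` of the bundle of agent `j` -/
noncomputable def val {N I : Type} (u : N → I → ℝ) (a : I → N) (M : Finset I) (i j : N) : ℝ :=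
  ∑ t ∈ M, if a t = j then u i t else 0

/-- value of an optional item -/
def ov {I : Type} (w : I → ℝ) : Option I → ℝ
  | none => 0
  | some t => w t

/-- partial matching of agents into `M` -/
def Valid {N I : Type} (φ : N → Option I) (M : Finset I) : Prop :=
  (∀ i t, φ i = some t → t ∈ M) ∧ (∀ i j t, φ i = some t → φ j = some t → i = j)

open scoped Classical in
noncomputable def rest {N I : Type} (φ : N → Option I) (M : Finset I) : Finset I :=
  M.filter (fun t => ¬ ∃ i, φ i = some t)

open scoped Classical in
noncomputable def somes {N I : Type} [Fintype N] (φ : N → Option I) : Finset N :=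
  Finset.univ.filter (fun i => (φ i).isSome)

/-- permutation optimality -/
def PM {N I : Type} [Fintype N] (u : N → I → ℝ) (a : I → N) (M : Finset I) : Prop :=
  ∀ σ : Equiv.Perm N, ∑ i, val u a M i (σ i) ≤ ∑ i, val u a M i i

variable {N I : Type}

theorem extend (φ : N → Option I) (M : Finset I) (h : Valid φ M) (a' : I → N) :
    ∃ a : I → N, (∀ (u : N → I → ℝ) i j, val u a M i j = ov (u i) (φ j) + val u a' (rest φ M) i j) ∧
      (∀ j t, φ j = some t → a t = j) ∧ (∀ t ∈ rest φ M, a t = a' t) := by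
  classical
  refine ⟨fun t => if h : ∃ i, φ i = some t then h.choose else a' t, ?_, ?_, ?_⟩
  · intro u i j
    unfold val
    rw [← Finset.sum_filter_add_sum_filter_not M (fun t => ∃ i, φ i = some t)]
    congr 1
    · have : ∀ t ∈ M.filter (fun t => ∃ i, φ i = some t),
          (if (if h : ∃ i, φ i = some t then h.choose else a' t) = j then u i t else 0)
            = if φ j = some t then u i t else 0 := by
        intro t ht
        have ht' := (Finset.mem_filter.1 ht).2
        rw [dif_pos ht']
        congr 1
        apply propext
        constructor
        · intro h1; rw [← h1]; exact ht'.choose_spec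
        · intro h1; exact h.2 _ _ _ ht'.choose_spec h1
      rw [Finset.sum_congr rfl this]
      cases hj : φ j with
      | none => simp [ov]
      | some s =>
        simp only [Option.some.injEq, ov]
        rw [Finset.sum_ite_eq, if_pos]
        exact Finset.mem_filter.2 ⟨h.1 _ _ hj, j, hj⟩
    · apply Finset.sum_congr
      · rfl
      · intro t ht
        have hh := (Finset.mem_filter.1 ht).2
        simp only [dif_neg hh]
  · intro j t hj
    have : ∃ i, φ i = some t := ⟨j, hj⟩
    simp only
    rw [dif_pos this]
    exact h.2 _ _ _ this.choose_spec hj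
  · intro t ht
    simp only
    rw [dif_neg (Finset.mem_filter.1 ht).2]

theorem mem_rest {φ : N → Option I} {M : Finset I} {t : I} :
    t ∈ rest φ M ↔ t ∈ M ∧ ∀ i, φ i ≠ some t := by
  classical
  simp [rest]

theorem rest_sub {φ : N → Option I} {M : Finset I} {t : I} (h : t ∈ rest φ M) : t ∈ M :=
  (mem_rest.1 h).1

theorem sum_upd [Fintype N] [DecidableEq N] (u : N → I → ℝ) (φ : N → Option I) (i : N) (x : Option I) :
    ∑ k, ov (u k) (Function.update φ i x k) = ∑ k, ov (u k) (φ k) - ov (u i) (φ i) + ov (u i) x := by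
  rw [← Finset.add_sum_erase _ _ (Finset.mem_univ i),
    ← Finset.add_sum_erase _ (fun k => ov (u k) (φ k)) (Finset.mem_univ i)]
  have : ∑ k ∈ Finset.univ.erase i, ov (u k) (Function.update φ i x k)
      = ∑ k ∈ Finset.univ.erase i, ov (u k) (φ k) := by
    apply Finset.sum_congr rfl
    intro k hk
    rw [Function.update_of_ne (Finset.ne_of_mem_erase hk)]
  rw [this]; simp; ring

theorem valid_upd_some [DecidableEq N] {φ : N → Option I} {M : Finset I} (h : Valid φ M) (i : N) {t : I}
    (ht : t ∈ rest φ M) : Valid (Function.update φ i (some t)) M := by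
  have ht := mem_rest.1 ht
  constructor
  · intro k s hk
    by_cases hki : k = i
    · subst hki; simp at hk; rw [← hk]; exact ht.1
    · rw [Function.update_of_ne hki] at hk; exact h.1 _ _ hk
  · intro k l s hk hl
    by_cases hki : k = i <;> by_cases hli : l = i
    · rw [hki, hli]
    · rw [Function.update_of_ne hli] at hl
      subst hki; simp at hk; rw [← hk] at hl; exact absurd hl (ht.2 _)
    · rw [Function.update_of_ne hki] at hk
      subst hli; simp at hl; rw [← hl] at hk; exact absurd hk (ht.2 _)
    · rw [Function.update_of_ne hki] at hk
      rw [Function.update_of_ne hli] at hl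
      exact h.2 _ _ _ hk hl

theorem valid_upd_none [DecidableEq N] {φ : N → Option I} {M : Finset I} (h : Valid φ M) (i : N) :
    Valid (Function.update φ i none) M := by
  constructor
  · intro k s hk
    by_cases hki : k = i
    · subst hki; simp at hk
    · rw [Function.update_of_ne hki] at hk; exact h.1 _ _ hk
  · intro k l s hk hl
    by_cases hki : k = i
    · subst hki; simp at hk
    by_cases hli : l = i
    · subst hli; simp at hl
    rw [Function.update_of_ne hki] at hk
    rw [Function.update_of_ne hli] at hl
    exact h.2 _ _ _ hk hl

theorem valid_perm {φ : N → Option I} {M : Finset I} (h : Valid φ M) (σ : Equiv.Perm N) :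
    Valid (fun i => φ (σ i)) M :=
  ⟨fun i t hi => h.1 _ _ hi, fun i j t hi hj => σ.injective (h.2 _ _ _ hi hj)⟩

theorem somes_upd [Fintype N] [DecidableEq N] {φ : N → Option I} (i : N) (t : I) (hi : (φ i).isSome) :
    somes (Function.update φ i (some t)) = somes φ := by
  classical
  ext k
  by_cases hk : k = i
  · subst hk; simp [somes, hi]
  · simp [somes, Function.update_of_ne hk]

theorem somes_perm [Fintype N] (φ : N → Option I) (σ : Equiv.Perm N) :
    (somes (fun i => φ (σ i))).card = (somes φ).card := by
  classical
  apply Finset.card_bij (fun i _ => σ i)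
  · intro i hi; simpa [somes] using hi
  · intro i _ j _ h; exact σ.injective h
  · intro j hj; exact ⟨σ.symm j, by simpa [somes] using hj, by simp⟩

theorem card_rest [Fintype N] {φ : N → Option I} {M : Finset I} (h : Valid φ M) :
    (rest φ M).card + (somes φ).card = M.card := by
  classical
  have h1 := Finset.card_filter_add_card_filter_not (s := M) (fun t => ∃ i, φ i = some t)
  have h2 : (M.filter (fun t => ∃ i, φ i = some t)).card = (somes φ).card := by
    symm
    apply Finset.card_bij (fun i hi => (φ i).get (by simpa [somes] using hi))
    · intro i hi
      simp only [Finset.mem_filter]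
      exact ⟨h.1 i _ (by simp), i, by simp⟩
    · intro i hi j hj hij
      refine h.2 i j ((φ i).get (by simpa [somes] using hi)) (by simp) ?_
      rw [hij]; simp
    · intro t ht
      obtain ⟨i, hi⟩ := (Finset.mem_filter.1 ht).2
      exact ⟨i, by simp [somes, hi], by simp [hi]⟩
  have h3 : (rest φ M).card = (M.filter (fun t => ¬ ∃ i, φ i = some t)).card := by
    unfold rest; congr
  rw [h3, ← h2, add_comm]
  convert h1

theorem exists_valid [Fintype N] (M : Finset I) (r : ℕ) (h1 : r ≤ Fintype.card N) (h2 : r ≤ M.card) :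
    ∃ φ : N → Option I, Valid φ M ∧ (somes φ).card = r := by
  classical
  obtain ⟨S, -, hS⟩ := Finset.exists_subset_card_eq (s := (Finset.univ : Finset N)) (by simpa using h1)
  obtain ⟨T, hT, hTc⟩ := Finset.exists_subset_card_eq h2
  have e : S ≃ T := Finset.equivOfCardEq (by omega)
  refine ⟨fun i => if h : i ∈ S then some (e ⟨i, h⟩) else none, ⟨?_, ?_⟩, ?_⟩
  · intro i t hi
    by_cases h : i ∈ S
    · simp only [h, dite_true, Option.some.injEq] at hi
      rw [← hi]; exact hT (e ⟨i, h⟩).2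
    · simp [h] at hi
  · intro i j t hi hj
    by_cases h : i ∈ S
    · by_cases h' : j ∈ S
      · simp only [h, h', dite_true, Option.some.injEq] at hi hj
        have := e.injective (Subtype.ext (hi.trans hj.symm))
        simpa using this
      · simp [h'] at hj
    · simp [h] at hi
  · rw [← hS]
    congr 1
    ext i
    by_cases h : i ∈ S <;> simp [somes, h]

/-- goods phase -/
theorem goods [Fintype N] [Finite I] [Nonempty N] (u : N → I → ℝ) :
    ∀ (m : ℕ) (M : Finset I), M.card = m → (∀ g ∈ M, ∃ i, 0 < u i g) →
      ∃ a : I → N, PM u a M ∧ ∀ i j, val u a M i j ≤ val u a M i i ∨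
        ∃ t ∈ M, a t = j ∧ val u a M i j ≤ val u a M i i + u i t := by
  classical
  have := Fintype.ofFinite I
  intro m
  induction m using Nat.strong_induction_on with
  | _ m ih =>
  intro M hM hg
  by_cases hne : M = ∅
  · subst hne
    exact ⟨fun _ => Classical.arbitrary N, by intro σ; simp [val], by intro i j; left; simp [val]⟩
  obtain ⟨g0, hg0⟩ := Finset.nonempty_iff_ne_empty.2 hne
  obtain ⟨φ, hφ, hmax⟩ := Finset.exists_max_image
    (Finset.univ.filter (fun φ : N → Option I => Valid φ M)) (fun φ => ∑ k, ov (u k) (φ k))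
    ⟨fun _ => none, Finset.mem_filter.2 ⟨Finset.mem_univ _, by simp [Valid]⟩⟩
  have hφ := (Finset.mem_filter.1 hφ).2
  have hmax : ∀ ψ : N → Option I, Valid ψ M → ∑ k, ov (u k) (ψ k) ≤ ∑ k, ov (u k) (φ k) :=
    fun ψ h => hmax ψ (by simp [h])
  have hnn : ∀ i, 0 ≤ ov (u i) (φ i) := by
    intro i
    have := hmax _ (valid_upd_none hφ i)
    rw [sum_upd] at this
    simp only [ov] at this ⊢
    linarith
  have hdom : ∀ i, ∀ t ∈ rest φ M, u i t ≤ ov (u i) (φ i) := by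
    intro i t ht
    have := hmax _ (valid_upd_some hφ i ht)
    rw [sum_upd] at this
    simp only [ov] at this ⊢
    linarith
  have hlt : (rest φ M).card < m := by
    rw [← hM]
    apply Finset.card_lt_card
    refine ⟨fun t ht => rest_sub ht, fun hsub => ?_⟩
    have hall : ∀ i, φ i = none := by
      intro i
      cases h : φ i with
      | none => rfl
      | some t => exact absurd h ((mem_rest.1 (hsub (hφ.1 _ _ h))).2 i)
    obtain ⟨i, hi⟩ := hg g0 hg0
    have := hdom i g0 (hsub hg0)
    rw [hall i] at this
    simp only [ov] at this
    linarith
  obtain ⟨a', hPM, hE⟩ := ih _ hlt (rest φ M) rfl (fun g hg' => hg g (rest_sub hg'))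
  obtain ⟨a, ha, ha1, ha2⟩ := extend φ M hφ a'
  refine ⟨a, ?_, ?_⟩
  · intro σ
    simp only [ha, Finset.sum_add_distrib]
    exact add_le_add (hmax _ (valid_perm hφ σ)) (hPM σ)
  · intro i j
    have key : val u a' (rest φ M) i j ≤ val u a M i i := by
      rw [ha]
      rcases hE i j with h | ⟨t, ht, -, h⟩
      · linarith [hnn i]
      · linarith [hdom i t ht]
    rw [ha u i j]
    cases hj : φ j with
    | none => left; simp only [ov]; linarith
    | some t =>
      right
      refine ⟨t, hφ.1 _ _ hj, ha1 _ _ hj, ?_⟩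
      simp only [ov]; linarith

/-- chores phase, full rounds -/
theorem chores [Fintype N] [Finite I] [Nonempty N] (u : N → I → ℝ) :
    ∀ (L : ℕ) (M : Finset I), M.card = L * Fintype.card N →
      ∃ a : I → N, PM u a M ∧ ∀ i j, M = ∅ ∨
        ∃ t ∈ M, ∃ t' ∈ M, a t = i ∧ a t' = j ∧ val u a M i j ≤ val u a M i i + u i t' - u i t := by
  classical
  have := Fintype.ofFinite I
  intro L
  induction L with
  | zero =>
    intro M hM
    have : M = ∅ := by simpa using hM
    subst this
    exact ⟨fun _ => Classical.arbitrary N, by intro σ; simp [val], by intro i j; left; rfl⟩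
  | succ L ih =>
  intro M hM
  obtain ⟨φ0, h0, h0c⟩ := exists_valid (N := N) M (Fintype.card N) le_rfl (by rw [hM]; nlinarith)
  obtain ⟨φ, hφ, hmax⟩ := Finset.exists_max_image
    (Finset.univ.filter (fun φ : N → Option I => Valid φ M ∧ (somes φ).card = Fintype.card N))
    (fun φ => ∑ k, ov (u k) (φ k)) ⟨φ0, by simp [h0, h0c]⟩
  obtain ⟨hφ, hc⟩ := (Finset.mem_filter.1 hφ).2
  have hmax : ∀ ψ : N → Option I, Valid ψ M → (somes ψ).card = Fintype.card N →
      ∑ k, ov (u k) (ψ k) ≤ ∑ k, ov (u k) (φ k) :=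
    fun ψ h h' => hmax ψ (by simp [h, h'])
  have hsome : ∀ i, ∃ t, φ i = some t := by
    intro i
    have : somes φ = Finset.univ := Finset.eq_univ_of_card _ hc
    have hi : i ∈ somes φ := by rw [this]; simp
    exact Option.isSome_iff_exists.1 (by simpa [somes] using hi)
  have hdom : ∀ i, ∀ t ∈ rest φ M, u i t ≤ ov (u i) (φ i) := by
    intro i t ht
    obtain ⟨s, hs⟩ := hsome i
    have := hmax _ (valid_upd_some hφ i ht) (by rw [somes_upd _ _ (by simp [hs]), hc])
    rw [sum_upd] at this
    simp only [ov] at this ⊢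
    linarith
  have hcard : (rest φ M).card = L * Fintype.card N := by
    have := card_rest hφ
    rw [hc, hM] at this
    have h2 : (L + 1) * Fintype.card N = L * Fintype.card N + Fintype.card N := by ring
    omega
  obtain ⟨a', hPM, hE⟩ := ih (rest φ M) hcard
  obtain ⟨a, ha, ha1, ha2⟩ := extend φ M hφ a'
  refine ⟨a, ?_, ?_⟩
  · intro σ
    simp only [ha, Finset.sum_add_distrib]
    exact add_le_add (hmax _ (valid_perm hφ σ) (by rw [somes_perm, hc])) (hPM σ)
  · intro i j
    right
    obtain ⟨s, hs⟩ := hsome i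
    obtain ⟨s', hs'⟩ := hsome j
    rcases hE i j with h | ⟨t, ht, t', ht', hti, htj, h⟩
    · refine ⟨s, hφ.1 _ _ hs, s', hφ.1 _ _ hs', ha1 _ _ hs, ha1 _ _ hs', ?_⟩
      rw [ha, ha, h, hs, hs']
      simp [ov, val]
    · refine ⟨t, rest_sub ht, s', hφ.1 _ _ hs', by rw [ha2 t ht, hti], ha1 _ _ hs', ?_⟩
      have := hdom i t' ht'
      rw [ha, ha, hs']
      simp only [ov] at *
      linarith


/-- total value -/
noncomputable def tot (u : N → I → ℝ) (a : I → N) (K G : Finset I) (i j : N) : ℝ :=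
  val u a K i j + val u a G i j

/-- strong EF1 type condition -/
def SE (u : N → I → ℝ) (a : I → N) (K G : Finset I) (i j : N) : Prop :=
  tot u a K G i j ≤ tot u a K G i i ∨
  (∃ t ∈ K, a t = i ∧ tot u a K G i j ≤ tot u a K G i i - u i t) ∨
  (∃ t ∈ G, a t = j ∧ tot u a K G i j ≤ tot u a K G i i + u i t)

def Good [Fintype N] (u : N → I → ℝ) (a : I → N) (K G : Finset I) : Prop :=
  (∀ σ : Equiv.Perm N, ∑ i, tot u a K G i (σ i) ≤ ∑ i, tot u a K G i i) ∧ ∀ i j, SE u a K G i j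

theorem val_congr (u : N → I → ℝ) {a b : I → N} {M : Finset I} (h : ∀ t ∈ M, a t = b t) (i j : N) :
    val u a M i j = val u b M i j := by
  unfold val
  apply Finset.sum_congr rfl
  intro t ht
  rw [h t ht]

theorem val_empty (u : N → I → ℝ) (a : I → N) (i j : N) : val u a ∅ i j = 0 := by
  simp [val]

theorem ov_none (w : I → ℝ) : ov w none = 0 := rfl

theorem ov_some (w : I → ℝ) (t : I) : ov w (some t) = w t := rfl

theorem lemF [Fintype N] [Finite I] [Nonempty N] (u : N → I → ℝ) (K G : Finset I)
    (hKG : Disjoint K G) (hK : K.Nonempty) (hneg : ∀ i, ∀ c ∈ K, u i c ≤ 0)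
    (hpos : ∀ g ∈ G, ∃ i, 0 < u i g) (hF : ∀ i, ∀ g ∈ G, ∀ c ∈ K, u i g + u i c ≤ 0) :
    ∃ a : I → N, Good u a K G := by
  classical
  have := Fintype.ofFinite I
  have hn : 0 < Fintype.card N := Fintype.card_pos
  obtain ⟨L, ρ, hcardK, hρ1, hρn⟩ : ∃ L ρ, K.card = L * Fintype.card N + ρ ∧ 1 ≤ ρ ∧ ρ ≤ Fintype.card N := by
    refine ⟨(K.card - 1) / Fintype.card N, (K.card - 1) % Fintype.card N + 1, ?_, by omega, ?_⟩
    · have h1 := Nat.div_add_mod (K.card - 1) (Fintype.card N)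
      have h2 : 0 < K.card := hK.card_pos
      rw [mul_comm] at h1
      omega
    · exact Nat.mod_lt _ hn
  obtain ⟨φ0, h0, h0c⟩ := exists_valid (N := N) K ρ hρn (by rw [hcardK]; omega)
  let P : ((N → Option I) × (N → Option I)) → Prop := fun q =>
    Valid q.1 K ∧ (somes q.1).card = ρ ∧ Valid q.2 G ∧ ∀ i, q.1 i = none → q.2 i = none
  obtain ⟨⟨φ, γ⟩, hq, hmax0⟩ := Finset.exists_max_image (Finset.univ.filter P)
    (fun q => ∑ k, ov (u k) (q.1 k) + ∑ k, ov (u k) (q.2 k))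
    ⟨(φ0, fun _ => none), Finset.mem_filter.2 ⟨Finset.mem_univ _, h0, h0c, by simp [Valid], by simp⟩⟩
  obtain ⟨hφ, hc, hγ, hsub⟩ := (Finset.mem_filter.1 hq).2
  simp only at hφ hc hγ hsub
  have hmax : ∀ φ' γ' : N → Option I, Valid φ' K → (somes φ').card = ρ → Valid γ' G →
      (∀ i, φ' i = none → γ' i = none) → ∑ k, ov (u k) (φ' k) + ∑ k, ov (u k) (γ' k) ≤
        ∑ k, ov (u k) (φ k) + ∑ k, ov (u k) (γ k) :=
    fun φ' γ' h1 h2 h3 h4 => hmax0 (φ', γ') (Finset.mem_filter.2 ⟨Finset.mem_univ _, h1, h2, h3, h4⟩)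
  -- facts
  have hdomK : ∀ i s, φ i = some s → ∀ c ∈ rest φ K, u i c ≤ u i s := by
    intro i s hs c hcr
    have h1 := hmax _ γ (valid_upd_some hφ i hcr) (by rw [somes_upd _ _ (by simp [hs]), hc]) hγ
      (by
        intro k hk
        by_cases hki : k = i
        · subst hki; simp at hk
        · rw [Function.update_of_ne hki] at hk; exact hsub k hk)
    rw [sum_upd, hs] at h1
    simp only [ov_none, ov_some] at h1
    linarith
  have hnn : ∀ i, 0 ≤ ov (u i) (γ i) := by
    intro i
    have h1 := hmax φ _ hφ hc (valid_upd_none hγ i)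
      (by
        intro k hk
        by_cases hki : k = i
        · subst hki; simp
        · rw [Function.update_of_ne hki]; exact hsub k hk)
    rw [sum_upd] at h1
    simp only [ov_none, ov_some] at h1 ⊢
    linarith
  have hdomG : ∀ i s, φ i = some s → ∀ g ∈ rest γ G, u i g ≤ ov (u i) (γ i) := by
    intro i s hs g hg
    have h1 := hmax φ _ hφ hc (valid_upd_some hγ i hg)
      (by
        intro k hk
        by_cases hki : k = i
        · subst hki; simp [hs] at hk
        · rw [Function.update_of_ne hki]; exact hsub k hk)
    rw [sum_upd] at h1
    simp only [ov_none, ov_some] at h1 ⊢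
    linarith
  have hcardR : (rest φ K).card = L * Fintype.card N := by
    have := card_rest hφ
    omega
  obtain ⟨aK', hPMK, hEK⟩ := chores u L (rest φ K) hcardR
  obtain ⟨aG', hPMG, hEG⟩ := goods u _ (rest γ G) rfl (fun g hg => hpos g (rest_sub hg))
  obtain ⟨aK, hvK, haK1, haK2⟩ := extend φ K hφ aK'
  obtain ⟨aG, hvG, haG1, haG2⟩ := extend γ G hγ aG'
  let a : I → N := fun t => if t ∈ K then aK t else aG t
  have haK : ∀ t ∈ K, a t = aK t := fun t ht => by simp [a, ht]
  have haG : ∀ t ∈ G, a t = aG t := fun t ht => by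
    have : t ∉ K := fun h => Finset.disjoint_left.1 hKG h ht
    simp [a, this]
  have htot : ∀ i j, tot u a K G i j = (ov (u i) (φ j) + ov (u i) (γ j))
      + (val u aK' (rest φ K) i j + val u aG' (rest γ G) i j) := by
    intro i j
    unfold tot
    rw [val_congr u haK, val_congr u haG, hvK, hvG]; ring
  refine ⟨a, ?_, ?_⟩
  · intro σ
    simp only [htot, Finset.sum_add_distrib]
    have h1 := hmax _ _ (valid_perm hφ σ) (by rw [somes_perm, hc]) (valid_perm hγ σ)
      (fun i hi => hsub _ hi)
    exact add_le_add h1 (add_le_add (hPMK σ) (hPMG σ))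
  · intro i j
    have hG0 : ∀ c ∈ K, val u aG' (rest γ G) i j ≤ val u aG' (rest γ G) i i - u i c := by
      intro c hcK
      rcases hEG i j with h | ⟨t, ht, -, h⟩
      · linarith [hneg i c hcK]
      · linarith [hF i t (rest_sub ht) c hcK]
    have hG1 : ∀ s, φ i = some s →
        val u aG' (rest γ G) i j ≤ val u aG' (rest γ G) i i + ov (u i) (γ i) := by
      intro s hs
      rcases hEG i j with h | ⟨t, ht, -, h⟩
      · linarith [hnn i]
      · linarith [hdomG i s hs t ht]
    have hγj : ∀ c ∈ K, ov (u i) (γ j) + u i c ≤ 0 := by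
      intro c hcK
      cases hj : γ j with
      | none => simp only [ov_none, ov_some]; linarith [hneg i c hcK]
      | some g => simp only [ov_none, ov_some]; exact hF i g (hγ.1 _ _ hj) c hcK
    have hφj : ov (u i) (φ j) + ov (u i) (γ j) ≤ 0 := by
      cases hj : φ j with
      | none => rw [hsub j hj]; simp [ov]
      | some s => simp only [ov_none, ov_some]; linarith [hγj s (hφ.1 _ _ hj)]
    rcases hEK i j with hemp | ⟨t, ht, t', ht', hti, htj, hval⟩
    · -- no full rounds
      have e1 : ∀ k, val u aK' (rest φ K) i k = 0 := by intro k; rw [hemp, val_empty]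
      cases hi : φ i with
      | some s =>
        right; left
        refine ⟨s, hφ.1 _ _ hi, by rw [haK s (hφ.1 _ _ hi), haK1 _ _ hi], ?_⟩
        rw [htot, htot, e1, e1, hi]
        have := hG1 s hi
        simp only [ov_none, ov_some] at *
        linarith
      | none =>
        have hγi := hsub i hi
        cases hj : φ j with
        | some s =>
          have h1 := hG0 s (hφ.1 _ _ hj)
          cases hgj : γ j with
          | none =>
            left
            rw [htot, htot, e1, e1, hi, hj, hγi, hgj]
            simp only [ov_none, ov_some]
            linarith
          | some g =>
            right; right
            refine ⟨g, hγ.1 _ _ hgj, by rw [haG g (hγ.1 _ _ hgj), haG1 _ _ hgj], ?_⟩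
            rw [htot, htot, e1, e1, hi, hj, hγi, hgj]
            simp only [ov_none, ov_some]
            linarith
        | none =>
          have hgj := hsub j hj
          rcases hEG i j with h | ⟨t, ht, htj, h⟩
          · left
            rw [htot, htot, e1, e1, hi, hj, hγi, hgj]
            simp only [ov_none, ov_some]
            linarith
          · right; right
            refine ⟨t, rest_sub ht, by rw [haG t (rest_sub ht), haG2 t ht, htj], ?_⟩
            rw [htot, htot, e1, e1, hi, hj, hγi, hgj]
            simp only [ov_none, ov_some]
            linarith
    · right; left
      refine ⟨t, rest_sub ht, by rw [haK t (rest_sub ht), haK2 t ht, hti], ?_⟩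
      rw [htot, htot]
      cases hi : φ i with
      | some s =>
        have h1 := hdomK i s hi t' ht'
        have h2 := hG1 s hi
        simp only [ov_none, ov_some]
        linarith
      | none =>
        have hγi := hsub i hi
        have h1 := hG0 t' (rest_sub ht')
        rw [hγi]
        simp only [ov_none, ov_some]
        linarith

theorem core [Fintype N] [Finite I] [Nonempty N] :
    ∀ (k : ℕ) (u : N → I → ℝ) (K G : Finset I), K.card = k →
    Disjoint K G → (∀ i, ∀ c ∈ K, u i c ≤ 0) → (∀ g ∈ G, ∃ i, 0 < u i g) →
    ∃ a : I → N, Good u a K G := by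
  classical
  intro k
  induction k with
  | zero =>
    intro u K G hk hd hneg hpos
    have : K = ∅ := by simpa using hk
    subst this
    obtain ⟨a, h1, h2⟩ := goods u _ G rfl hpos
    refine ⟨a, ?_, ?_⟩
    · intro σ
      simp only [tot, val_empty, zero_add]
      exact h1 σ
    · intro i j
      unfold SE
      simp only [tot, val_empty, zero_add]
      rcases h2 i j with h | h
      · exact Or.inl h
      · exact Or.inr (Or.inr h)
  | succ k ih =>
    intro u K G hk hd hneg hpos
    by_cases hF : ∀ i, ∀ g ∈ G, ∀ c ∈ K, u i g + u i c ≤ 0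
    · exact lemF u K G hd (Finset.card_pos.1 (by omega)) hneg hpos hF
    push Not at hF
    obtain ⟨i0, g, hg, c, hcK, h0⟩ := hF
    have hcG : c ∉ G := Finset.disjoint_left.1 hd hcK
    have hgK : g ∉ K := Finset.disjoint_right.1 hd hg
    let u' : N → I → ℝ := fun i => Function.update (u i) g (u i g + u i c)
    have hu'K : ∀ i, ∀ t ∈ K, u' i t = u i t := by
      intro i t ht
      have : t ≠ g := fun h => hgK (h ▸ ht)
      simp [u', Function.update_of_ne this]
    have hu'G : ∀ i, ∀ t ∈ G, u' i t ≤ u i t := by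
      intro i t ht
      by_cases h : t = g
      · subst h; simp [u']; exact hneg i c hcK
      · simp [u', Function.update_of_ne h]
    obtain ⟨a, h1, h2⟩ := ih u' (K.erase c) G (by rw [Finset.card_erase_of_mem hcK]; omega)
      (hd.mono_left (Finset.erase_subset _ _))
      (fun i t ht => by rw [hu'K i t (Finset.mem_of_mem_erase ht)]; exact hneg i t (Finset.mem_of_mem_erase ht))
      (fun t ht => by
        by_cases h : t = g
        · subst h; exact ⟨i0, by simpa [u'] using h0⟩
        · obtain ⟨i, hi⟩ := hpos t ht
          exact ⟨i, by simpa [u', Function.update_of_ne h] using hi⟩)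
    let a' := Function.update a c (a g)
    have ha'G : ∀ t ∈ G, a' t = a t := by
      intro t ht
      have : t ≠ c := fun h => hcG (h ▸ ht)
      simp [a', Function.update_of_ne this]
    have ha'K : ∀ t ∈ K.erase c, a' t = a t := by
      intro t ht
      simp [a', Function.update_of_ne (Finset.ne_of_mem_erase ht)]
    have htot : ∀ i j, tot u a' K G i j = tot u' a (K.erase c) G i j := by
      intro i j
      unfold tot
      have e1 : val u a' K i j = (if a g = j then u i c else 0) + val u' a (K.erase c) i j := by
        unfold val
        rw [← Finset.add_sum_erase _ _ hcK]
        congr 1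
        · simp [a']
        · apply Finset.sum_congr rfl
          intro t ht
          rw [hu'K i t (Finset.mem_of_mem_erase ht)]
          simp only [ha'K t ht]
      have e2 : val u' a G i j = (if a g = j then u i c else 0) + val u a' G i j := by
        unfold val
        rw [← Finset.add_sum_erase _ _ hg, ← Finset.add_sum_erase _ (fun t => if a' t = j then u i t else 0) hg]
        rw [← add_assoc]
        congr 1
        · simp only [ha'G g hg, u', Function.update_self]
          split_ifs
          · ring
          · simp
        · apply Finset.sum_congr rfl
          intro t ht
          simp only [ha'G t (Finset.mem_of_mem_erase ht), u',
            Function.update_of_ne (Finset.ne_of_mem_erase ht)]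
      rw [e1, e2]; ring
    refine ⟨a', ?_, ?_⟩
    · intro σ
      simp only [htot]
      exact h1 σ
    · intro i j
      unfold SE
      simp only [htot]
      rcases h2 i j with h | ⟨t, ht, hti, h⟩ | ⟨t, ht, htj, h⟩
      · exact Or.inl h
      · right; left
        refine ⟨t, Finset.mem_of_mem_erase ht, by rw [ha'K t ht, hti], ?_⟩
        rw [hu'K i t (Finset.mem_of_mem_erase ht)] at h
        exact h
      · right; right
        exact ⟨t, ht, by rw [ha'G t ht, htj], h.trans (by linarith [hu'G i t ht])⟩

end EFM

namespace EFM
theorem closed_walk {N : Type} [Fintype N] (d : N → N → ℝ) (h0 : ∀ i, d i i = 0)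
    (hσ : ∀ σ : Equiv.Perm N, ∑ i, d i (σ i) ≤ 0) :
    ∀ (m : ℕ) (c : ℕ → N), c m = c 0 → ∑ k ∈ Finset.range m, d (c k) (c (k + 1)) ≤ 0 := by
  classical
  intro m
  induction m using Nat.strong_induction_on with
  | _ m ih =>
  intro c hc
  by_cases hinj : ∀ a b, a < b → b < m → c a ≠ c b
  · rcases Nat.eq_zero_or_pos m with hm | hm
    · subst hm; simp
    obtain ⟨m, rfl⟩ : ∃ k, m = k + 1 := ⟨m - 1, by omega⟩
    have he : Function.Injective (fun k : Fin (m + 1) => c k) := by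
      intro a b hab
      by_contra hne
      rcases lt_or_gt_of_ne (fun h => hne (Fin.ext h) : (a : ℕ) ≠ b) with h | h
      · exact hinj _ _ h b.2 hab
      · exact hinj _ _ h a.2 hab.symm
    let e : Fin (m + 1) ↪ N := ⟨_, he⟩
    have h1 := hσ (Equiv.Perm.viaFintypeEmbedding (finRotate (m + 1)) e)
    have h2 : ∑ i, d i (Equiv.Perm.viaFintypeEmbedding (finRotate (m + 1)) e i)
        = ∑ k ∈ Finset.range (m + 1), d (c k) (c (k + 1)) := by
      rw [← Finset.sum_subset (Finset.subset_univ (Finset.univ.map e))]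
      · rw [Finset.sum_map, Finset.sum_range]
        apply Finset.sum_congr rfl
        intro k _
        rw [Equiv.Perm.viaFintypeEmbedding_apply_image]
        change d (c k) (c (finRotate (m + 1) k : Fin (m + 1))) = _
        congr 1
        rw [coe_finRotate]
        split_ifs with hk
        · subst hk; simp [hc]
        · rfl
      · intro i _ hi
        rw [Equiv.Perm.viaFintypeEmbedding_apply_notMem_range _ e, h0]
        rintro ⟨k, hk⟩
        exact hi (Finset.mem_map.2 ⟨k, Finset.mem_univ _, hk⟩)
    rw [← h2]; exact h1
  · push Not at hinj
    obtain ⟨a, b, hab, hbm, hcab⟩ := hinj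
    have h1 := ih (b - a) (by omega) (fun k => c (a + k)) (by
      rw [show a + (b - a) = b by omega, add_zero, hcab])
    have h2 := ih (a + (m - b)) (by omega) (fun k => if k ≤ a then c k else c (k + (b - a))) (by
      rw [if_neg (by omega), if_pos (by omega), show a + (m - b) + (b - a) = m by omega, hc])
    rw [Finset.sum_range_add] at h2
    have e1 : ∑ k ∈ Finset.range a, d (if k ≤ a then c k else c (k + (b - a)))
        (if k + 1 ≤ a then c (k + 1) else c (k + 1 + (b - a))) =
        ∑ k ∈ Finset.range a, d (c k) (c (k + 1)) := by
      apply Finset.sum_congr rfl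
      intro k hk
      have := Finset.mem_range.1 hk
      rw [if_pos (by omega), if_pos (by omega)]
    have e2 : ∑ k ∈ Finset.range (m - b), d (if a + k ≤ a then c (a + k) else c (a + k + (b - a)))
        (if a + k + 1 ≤ a then c (a + k + 1) else c (a + k + 1 + (b - a))) =
        ∑ k ∈ Finset.range (m - b), d (c (b + k)) (c (b + k + 1)) := by
      apply Finset.sum_congr rfl
      intro k hk
      congr 1
      · split_ifs with h
        · have : k = 0 := by omega
          subst this; simpa using hcab
        · congr 1; omega
      · rw [if_neg (by omega)]; congr 1; omega
    have h2' : ∑ k ∈ Finset.range a, d (c k) (c (k + 1)) +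
        ∑ k ∈ Finset.range (m - b), d (c (b + k)) (c (b + k + 1)) ≤ 0 := by
      rw [← e1, ← e2]; exact h2
    have e3 : ∑ k ∈ Finset.range m, d (c k) (c (k + 1)) =
        ∑ k ∈ Finset.range a, d (c k) (c (k + 1)) +
        ∑ k ∈ Finset.range (b - a), d (c (a + k)) (c (a + k + 1)) +
        ∑ k ∈ Finset.range (m - b), d (c (b + k)) (c (b + k + 1)) := by
      have q : m = (a + (b - a)) + (m - b) := by omega
      conv_lhs => rw [q]
      rw [Finset.sum_range_add, Finset.sum_range_add, show a + (b - a) = b by omega]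
    have h1' : ∑ k ∈ Finset.range (b - a), d (c (a + k)) (c (a + k + 1)) ≤ 0 := h1
    rw [e3]; linarith

theorem potentials {N : Type} [Fintype N] (d : N → N → ℝ) (h0 : ∀ i, d i i = 0)
    (hσ : ∀ σ : Equiv.Perm N, ∑ i, d i (σ i) ≤ 0) :
    ∃ p : N → ℝ, ∀ i j, d i j + p j ≤ p i := by
  classical
  let S : N → Set ℝ := fun i => {x | ∃ (m : ℕ) (c : ℕ → N), c 0 = i ∧
    x = ∑ k ∈ Finset.range m, d (c k) (c (k + 1))}
  have hb : ∀ i, BddAbove (S i) := by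
    intro i
    refine ⟨∑ j, |d j i|, ?_⟩
    rintro x ⟨m, c, hc, rfl⟩
    have h1 := closed_walk d h0 hσ (m + 1) (fun k => if k ≤ m then c k else i) (by simp [hc])
    rw [Finset.sum_range_succ] at h1
    have e1 : ∑ k ∈ Finset.range m, d (if k ≤ m then c k else i)
        (if k + 1 ≤ m then c (k + 1) else i) = ∑ k ∈ Finset.range m, d (c k) (c (k + 1)) := by
      apply Finset.sum_congr rfl
      intro k hk
      have := Finset.mem_range.1 hk
      rw [if_pos (by omega), if_pos (by omega)]
    simp only [le_refl, if_true, if_neg (show ¬ m + 1 ≤ m by omega)] at h1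
    rw [e1] at h1
    have h2 : |d (c m) i| ≤ ∑ j, |d j i| :=
      Finset.single_le_sum (f := fun j => |d j i|) (fun j _ => abs_nonneg _) (Finset.mem_univ _)
    have h3 := neg_abs_le (d (c m) i)
    linarith
  have hne : ∀ i, (S i).Nonempty := fun i => ⟨0, 0, fun _ => i, rfl, by simp⟩
  refine ⟨fun i => sSup (S i), fun i j => ?_⟩
  have : sSup (S j) ≤ sSup (S i) - d i j := by
    apply csSup_le (hne j)
    rintro x ⟨m, c, hc, rfl⟩
    have : d i j + ∑ k ∈ Finset.range m, d (c k) (c (k + 1)) ≤ sSup (S i) := by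
      apply le_csSup (hb i)
      refine ⟨m + 1, fun k => if k = 0 then i else c (k - 1), by simp, ?_⟩
      rw [Finset.sum_range_succ']
      simp [hc, add_comm]
    linarith
  simp only
  linarith

/-- choosing the cut-off level -/
theorem level {n : ℕ} (hn : 0 < n) (p : Fin n → ℝ) : ∃ c : ℝ, ∑ i, max (p i - c) 0 = 1 := by
  have hcont : Continuous (fun c : ℝ => ∑ i, max (p i - c) 0) := by fun_prop
  let B := ∑ i, |p i|
  have hB : ∀ i, |p i| ≤ B := fun i =>
    Finset.single_le_sum (f := fun i => |p i|) (fun j _ => abs_nonneg _) (Finset.mem_univ _)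
  have h1 : ∑ i, max (p i - B) 0 = 0 := by
    apply Finset.sum_eq_zero
    intro i _
    apply max_eq_right
    linarith [hB i, le_abs_self (p i)]
  have h2 : 1 ≤ ∑ i, max (p i - (-B - 1)) 0 := by
    refine le_trans ?_ (Finset.single_le_sum (f := fun i => max (p i - (-B - 1)) 0)
      (fun j _ => le_max_right _ _) (Finset.mem_univ (⟨0, hn⟩ : Fin n)))
    refine le_trans ?_ (le_max_left _ _)
    linarith [hB ⟨0, hn⟩, neg_abs_le (p ⟨0, hn⟩)]
  have hB0 : 0 ≤ B := Finset.sum_nonneg (fun i _ => abs_nonneg _)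
  have := intermediate_value_Icc' (a := -B - 1) (b := B) (by linarith) hcont.continuousOn
  obtain ⟨c, -, hc⟩ := this (show (1 : ℝ) ∈ Set.Icc (∑ i, max (p i - B) 0) (∑ i, max (p i - (-B - 1)) 0) from
    ⟨by rw [h1]; norm_num, h2⟩)
  exact ⟨c, hc⟩
end EFM

namespace EFM

def Half (T : Set (ℝ → ℝ)) : Prop :=
  ∀ E : Set ℝ, MeasurableSet E ∧ E ⊆ Set.Icc 0 1 → ∃ F, MeasurableSet F ∧ F ⊆ E ∧
    ∀ h ∈ T, ∫ x in F, h x = (∫ x in E, h x) / 2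

/-- dyadic chain -/
def chain (half : Set ℝ → Set ℝ) (E : Set ℝ) : ℕ → ℕ → Set ℝ
  | 0, j => if j = 0 then ∅ else E
  | k + 1, j => if j % 2 = 0 then chain half E k (j / 2)
      else chain half E k (j / 2) ∪ half (chain half E k (j / 2 + 1) \ chain half E k (j / 2))

theorem int_diff {h : ℝ → ℝ} {A B : Set ℝ} (hA : MeasurableSet A)
    (hB : IntegrableOn h B) (hAB : A ⊆ B) :
    ∫ x in B \ A, h x = (∫ x in B, h x) - ∫ x in A, h x :=
  setIntegral_diff hA hB hAB

theorem fam (T : Set (ℝ → ℝ)) (hInt : ∀ h ∈ T, IntegrableOn h (Set.Icc 0 1)) (hT : Half T)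
    (E : Set ℝ) (hE : MeasurableSet E) (hE1 : E ⊆ Set.Icc 0 1) :
    ∃ S : ℝ → Set ℝ, (∀ t, MeasurableSet (S t)) ∧ Monotone S ∧ (∀ t, S t ⊆ E) ∧ S 0 = ∅ ∧ S 1 = E ∧
      ∀ t, 0 ≤ t → t ≤ 1 → ∀ h ∈ T, ∫ x in S t, h x = t * ∫ x in E, h x := by
  choose! half hm hs hi using hT
  set C := chain half E with hC
  have P : ∀ k, (∀ j, MeasurableSet (C k j)) ∧ (∀ j, C k j ⊆ E) ∧ (∀ j, C k j ⊆ C k (j + 1)) ∧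
      C k 0 = ∅ ∧ C k (2 ^ k) = E ∧
      ∀ j ≤ 2 ^ k, ∀ h ∈ T, ∫ x in C k j, h x = (j : ℝ) / 2 ^ k * ∫ x in E, h x := by
    intro k
    induction k with
    | zero =>
      refine ⟨?_, ?_, ?_, ?_, ?_, ?_⟩
      · intro j; simp only [hC, chain]; split_ifs <;> simp [hE]
      · intro j; simp only [hC, chain]; split_ifs <;> simp
      · intro j; simp only [hC, chain]; split_ifs <;> simp_all
      · simp [hC, chain]
      · simp [hC, chain]
      · intro j hj h hh
        have : j = 0 ∨ j = 1 := by simp at hj; omega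
        rcases this with rfl | rfl <;> simp [hC, chain]
    | succ k ih =>
      obtain ⟨h1, h2, h3, h4, h5, h6⟩ := ih
      have hev : ∀ j, C (k + 1) (2 * j) = C k j := by
        intro j
        simp only [hC, chain]
        rw [if_pos (by omega), show 2 * j / 2 = j by omega]
      have hod : ∀ j, C (k + 1) (2 * j + 1) = C k j ∪ half (C k (j + 1) \ C k j) := by
        intro j
        simp only [hC, chain]
        rw [if_neg (by omega), show (2 * j + 1) / 2 = j by omega]
      have hd : ∀ j, MeasurableSet (C k (j + 1) \ C k j) ∧ C k (j + 1) \ C k j ⊆ Set.Icc 0 1 :=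
        fun j => ⟨(h1 _).diff (h1 _), Set.sdiff_subset.trans ((h2 _).trans hE1)⟩
      refine ⟨?_, ?_, ?_, ?_, ?_, ?_⟩
      · intro j
        rcases Nat.even_or_odd' j with ⟨i, rfl | rfl⟩
        · rw [hev]; exact h1 i
        · rw [hod]; exact (h1 i).union (hm _ (hd i))
      · intro j
        rcases Nat.even_or_odd' j with ⟨i, rfl | rfl⟩
        · rw [hev]; exact h2 i
        · rw [hod]; exact Set.union_subset (h2 i) ((hs _ (hd i)).trans (Set.sdiff_subset.trans (h2 _)))
      · intro j
        rcases Nat.even_or_odd' j with ⟨i, rfl | rfl⟩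
        · rw [hev, hod]; exact Set.subset_union_left
        · rw [hod, show 2 * i + 1 + 1 = 2 * (i + 1) by ring, hev]
          exact Set.union_subset (h3 i) ((hs _ (hd i)).trans Set.sdiff_subset)
      · have := hev 0
        rw [mul_zero] at this; rw [this, h4]
      · rw [pow_succ, mul_comm, hev, h5]
      · intro j hj h hh
        rcases Nat.even_or_odd' j with ⟨i, rfl | rfl⟩
        · rw [hev, h6 i (by rw [pow_succ] at hj; omega) h hh]
          push_cast
          rw [pow_succ]
          field_simp
        · have hi2 : i + 1 ≤ 2 ^ k := by rw [pow_succ] at hj; omega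
          have hI : IntegrableOn h (C k (i + 1)) := (hInt h hh).mono_set ((h2 _).trans hE1)
          rw [hod, setIntegral_union]
          · rw [hi _ (hd i) h hh, int_diff (h1 i) hI (h3 i), h6 i (by omega) h hh, h6 (i + 1) hi2 h hh]
            push_cast
            rw [pow_succ]
            field_simp
            ring
          · exact Set.disjoint_left.2 (fun x hx hx2 => ((hs _ (hd i)) hx2).2 hx)
          · exact hm _ (hd i)
          · exact hI.mono_set (h3 i)
          · exact hI.mono_set ((hs _ (hd i)).trans Set.sdiff_subset)
  have hmono : ∀ k, Monotone (C k) := fun k => monotone_nat_of_le_succ (P k).2.2.1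
  have hstep : ∀ k j, C (k + 1) (2 * j) = C k j := by
    intro k j
    simp only [hC, chain]
    rw [if_pos (by omega), show 2 * j / 2 = j by omega]
  have hkm : ∀ t : ℝ, 0 ≤ t → Monotone (fun k => C k ⌊t * 2 ^ k⌋₊) := by
    intro t ht
    apply monotone_nat_of_le_succ
    intro k
    rw [← hstep k]
    apply hmono
    apply Nat.le_floor
    push_cast
    have := Nat.floor_le (show 0 ≤ t * 2 ^ k by positivity)
    rw [pow_succ]; linarith
  refine ⟨fun t => ⋃ k, C k ⌊t * 2 ^ k⌋₊, ?_, ?_, ?_, ?_, ?_, ?_⟩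
  · intro t; exact MeasurableSet.iUnion (fun k => (P k).1 _)
  · intro s t hst
    apply Set.iUnion_mono
    intro k
    apply hmono
    apply Nat.floor_mono
    gcongr
  · intro t; exact Set.iUnion_subset (fun k => (P k).2.1 _)
  · simp [(P _).2.2.2.1]
  · apply Set.Subset.antisymm
    · exact Set.iUnion_subset (fun k => (P k).2.1 _)
    · intro x hx
      refine Set.mem_iUnion.2 ⟨0, ?_⟩
      have := (P 0).2.2.2.2.1
      simp only [pow_zero] at this
      simp [this, hx]
  · intro t ht0 ht1 h hh
    have l1 := tendsto_setIntegral_of_monotone (μ := volume) (f := h) (fun k => (P k).1 ⌊t * 2 ^ k⌋₊) (hkm t ht0)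
      ((hInt h hh).mono_set ((Set.iUnion_subset (fun k => (P k).2.1 _)).trans hE1))
    have l2 : Filter.Tendsto (fun k : ℕ => ∫ x in C k ⌊t * 2 ^ k⌋₊, h x) Filter.atTop
        (nhds (t * ∫ x in E, h x)) := by
      have e : ∀ k : ℕ, ∫ x in C k ⌊t * 2 ^ k⌋₊, h x
          = (⌊t * 2 ^ k⌋₊ : ℝ) / 2 ^ k * ∫ x in E, h x := by
        intro k
        apply (P k).2.2.2.2.2 _ _ h hh
        apply Nat.floor_le_of_le
        push_cast
        have : (0 : ℝ) < 2 ^ k := by positivity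
        nlinarith
      simp only [e]
      apply Filter.Tendsto.mul_const
      exact (tendsto_nat_floor_mul_div_atTop ht0).comp
        (tendsto_pow_atTop_atTop_of_one_lt (one_lt_two : (1 : ℝ) < 2))
    exact tendsto_nhds_unique l1 l2

theorem half_base (f0 : ℝ → ℝ) (hInt : IntegrableOn f0 (Set.Icc 0 1)) (hnn : ∀ x, 0 ≤ f0 x) :
    Half {f0} := by
  rintro E ⟨hE, hE1⟩
  have hI : Integrable (E.indicator f0) := (integrable_indicator_iff hE).2 (hInt.mono_set hE1)
  have hcont : Continuous (fun b => ∫ x in (0 : ℝ)..b, E.indicator f0 x) :=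
    intervalIntegral.continuous_primitive (fun a b => hI.intervalIntegrable) 0
  have hval : ∀ b, 0 ≤ b → ∫ x in (0 : ℝ)..b, E.indicator f0 x = ∫ x in E ∩ Set.Ioc 0 b, f0 x := by
    intro b hb
    rw [intervalIntegral.integral_of_le hb, setIntegral_indicator hE, Set.inter_comm]
  have h1 : ∫ x in (0 : ℝ)..1, E.indicator f0 x = ∫ x in E, f0 x := by
    rw [intervalIntegral.integral_of_le zero_le_one, ← integral_Icc_eq_integral_Ioc,
      setIntegral_indicator hE, Set.inter_eq_right.2 hE1]
  have hpos : 0 ≤ ∫ x in E, f0 x := setIntegral_nonneg hE (fun x _ => hnn x)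
  have := intermediate_value_Icc (zero_le_one : (0 : ℝ) ≤ 1) hcont.continuousOn
  obtain ⟨b, hb, hb2⟩ := this (show (∫ x in E, f0 x) / 2 ∈ Set.Icc (∫ x in (0 : ℝ)..0, E.indicator f0 x)
    (∫ x in (0 : ℝ)..1, E.indicator f0 x) by
      rw [h1, intervalIntegral.integral_same]; constructor <;> linarith)
  refine ⟨E ∩ Set.Ioc 0 b, hE.inter measurableSet_Ioc, Set.inter_subset_left, ?_⟩
  rintro h rfl
  rw [← hval b hb.1]; exact hb2

theorem half_step (T : Set (ℝ → ℝ)) (hInt : ∀ h ∈ T, IntegrableOn h (Set.Icc 0 1)) (hT : Half T)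
    (f0 : ℝ → ℝ) (hf0 : f0 ∈ T) (h : ℝ → ℝ) (hh : IntegrableOn h (Set.Icc 0 1))
    (hnn : ∀ x, 0 ≤ h x) (hle : ∀ x, h x ≤ f0 x) : Half (insert h T) := by
  rintro E ⟨hE, hE1⟩
  obtain ⟨S, hm, hmono, hsub, hS0, hS1, hlin⟩ := fam T hInt hT E hE hE1
  have hW : 0 ≤ ∫ x in E, f0 x :=
    setIntegral_nonneg hE (fun x _ => (hnn x).trans (hle x))
  set A : ℝ → ℝ := fun t => ∫ x in S t, h x with hA
  have hIh : ∀ t, IntegrableOn h (S t) := fun t => hh.mono_set ((hsub t).trans hE1)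
  have hI0 : ∀ t, IntegrableOn f0 (S t) := fun t => (hInt f0 hf0).mono_set ((hsub t).trans hE1)
  have hdiff : ∀ s t, s ≤ t → ∫ x in S t \ S s, h x = A t - A s := fun s t hst =>
    int_diff (hm s) (hIh t) (hmono hst)
  have hlip : ∀ s ∈ Set.Icc (0 : ℝ) 1, ∀ t ∈ Set.Icc (0 : ℝ) 1, s ≤ t →
      |A t - A s| ≤ (∫ x in E, f0 x) * (t - s) := by
    intro s hs t ht hst
    rw [← hdiff s t hst, abs_of_nonneg (setIntegral_nonneg ((hm t).diff (hm s)) (fun x _ => hnn x))]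
    calc ∫ x in S t \ S s, h x ≤ ∫ x in S t \ S s, f0 x :=
          setIntegral_mono ((hIh t).mono_set Set.sdiff_subset) ((hI0 t).mono_set Set.sdiff_subset) hle
      _ = _ := by
          rw [int_diff (hm s) (hI0 t) (hmono hst), hlin t ht.1 ht.2 f0 hf0, hlin s hs.1 hs.2 f0 hf0]
          ring
  have hcont : ContinuousOn A (Set.Icc 0 1) := by
    have : LipschitzOnWith ⟨_, hW⟩ A (Set.Icc 0 1) := by
      apply LipschitzOnWith.of_dist_le_mul
      intro s hs t ht
      rw [Real.dist_eq, Real.dist_eq]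
      change _ ≤ (∫ x in E, f0 x) * _
      rcases le_total s t with hst | hst
      · rw [abs_sub_comm, abs_sub_comm s, abs_of_nonneg (sub_nonneg.2 hst)]
        exact hlip s hs t ht hst
      · rw [abs_of_nonneg (sub_nonneg.2 hst)]
        exact hlip t ht s hs hst
    exact this.continuousOn
  have hg : ContinuousOn (fun t => A (t + 1 / 2) - A t) (Set.uIcc 0 (1 / 2)) := by
    rw [Set.uIcc_of_le (by norm_num)]
    apply ContinuousOn.sub
    · apply hcont.comp (by fun_prop)
      intro t ht
      exact ⟨by linarith [ht.1], by linarith [ht.2]⟩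
    · apply hcont.mono
      intro t ht
      exact ⟨ht.1, by linarith [ht.2]⟩
  have hA0 : A 0 = 0 := by simp [hA, hS0]
  have hA1 : A 1 = ∫ x in E, h x := by simp only [hA, hS1]
  obtain ⟨t, ht, ht2⟩ := intermediate_value_uIcc hg
    (show A 1 / 2 ∈ Set.uIcc (A (0 + 1 / 2) - A 0) (A (1 / 2 + 1 / 2) - A (1 / 2)) by
      rw [hA0, show (0 : ℝ) + 1 / 2 = 1 / 2 by norm_num, show (1 / 2 : ℝ) + 1 / 2 = 1 by norm_num,
        Set.mem_uIcc]
      rcases le_total (A (1 / 2)) (A 1 / 2) with hl | hl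
      · left; constructor <;> linarith
      · right; constructor <;> linarith)
  rw [Set.uIcc_of_le (by norm_num)] at ht
  refine ⟨S (t + 1 / 2) \ S t, (hm _).diff (hm _), Set.sdiff_subset.trans (hsub _), ?_⟩
  rintro k (rfl | hk)
  · rw [hdiff _ _ (by linarith), ← hA1]; exact ht2
  · rw [int_diff (hm t) ((hInt k hk).mono_set ((hsub _).trans hE1)) (hmono (by linarith)),
      hlin _ (by linarith [ht.1]) (by linarith [ht.2]) k hk, hlin _ ht.1 (by linarith [ht.2]) k hk]
    ring

theorem cake_division (n : ℕ) (f : Fin n → ℝ → ℝ) (hnn : ∀ i x, 0 ≤ f i x)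
    (hInt : ∀ i, IntegrableOn (f i) (Set.Icc (0 : ℝ) 1)) (x : Fin n → ℝ) (hx : ∀ i, 0 ≤ x i)
    (hx1 : ∑ i, x i = 1) :
    ∃ C : Fin n → Set ℝ, (∀ i, MeasurableSet (C i)) ∧ (∀ i j, i ≠ j → Disjoint (C i) (C j)) ∧
      ((⋃ i, C i) = Set.Icc (0 : ℝ) 1) ∧
      ∀ i j, ∫ y in C j, f i y = x j * ∫ y in Set.Icc (0 : ℝ) 1, f i y := by
  classical
  set f0 : ℝ → ℝ := fun y => ∑ i, f i y with hf0
  have hf0int : IntegrableOn f0 (Set.Icc (0 : ℝ) 1) := integrable_finsetSum _ (fun i _ => hInt i)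
  have hle : ∀ i y, f i y ≤ f0 y := fun i y =>
    Finset.single_le_sum (f := fun i => f i y) (fun j _ => hnn j y) (Finset.mem_univ i)
  have hf0nn : ∀ y, 0 ≤ f0 y := fun y => Finset.sum_nonneg (fun i _ => hnn i y)
  have key : ∀ s : Finset (Fin n), ∃ T : Set (ℝ → ℝ), f0 ∈ T ∧ (∀ i ∈ s, f i ∈ T) ∧
      (∀ h ∈ T, IntegrableOn h (Set.Icc 0 1)) ∧ Half T := by
    intro s
    induction s using Finset.induction_on with
    | empty => exact ⟨{f0}, rfl, by simp, by rintro h rfl; exact hf0int, half_base f0 hf0int hf0nn⟩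
    | insert i s _ ih =>
      obtain ⟨T, h1, h2, h3, h4⟩ := ih
      refine ⟨insert (f i) T, Or.inr h1, ?_, ?_, half_step T h3 h4 f0 h1 (f i) (hInt i) (hnn i) (hle i)⟩
      · intro j hj
        rcases Finset.mem_insert.1 hj with rfl | hj
        · exact Or.inl rfl
        · exact Or.inr (h2 j hj)
      · rintro h (rfl | hh)
        · exact hInt i
        · exact h3 h hh
  obtain ⟨T, -, h2, h3, h4⟩ := key Finset.univ
  obtain ⟨S, hm, hmono, hsub, hS0, hS1, hlin⟩ := fam T h3 h4 (Set.Icc 0 1) measurableSet_Icc le_rfl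
  let s : ℕ → ℝ := fun k => ∑ j : Fin n, if (j : ℕ) < k then x j else 0
  have hsmono : Monotone s := by
    intro a b hab
    apply Finset.sum_le_sum
    intro j _
    split_ifs with h h'
    · exact le_rfl
    · omega
    · exact hx j
    · exact le_rfl
  have hs0 : s 0 = 0 := by simp [s]
  have hsn : s n = 1 := by simp [s, hx1]
  have hstep : ∀ j : Fin n, s (j + 1) - s j = x j := by
    intro j
    simp only [s]
    rw [← Finset.sum_sub_distrib, Finset.sum_eq_single j]
    · simp
    · intro k _ hk
      have : (k : ℕ) ≠ j := fun h => hk (Fin.ext h)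
      split_ifs <;> first | omega | simp
    · simp
  have hsr : ∀ k ≤ n, 0 ≤ s k ∧ s k ≤ 1 := fun k hk =>
    ⟨hs0 ▸ hsmono (Nat.zero_le k), hsn ▸ hsmono hk⟩
  have hlt : ∀ i j : Fin n, i < j → Disjoint (S (s (i + 1)) \ S (s i)) (S (s (j + 1)) \ S (s j)) := by
    intro i j hij
    apply Set.disjoint_left.2
    intro y hy hy2
    exact hy2.2 (hmono (hsmono (Nat.succ_le_of_lt hij)) hy.1)
  refine ⟨fun j => S (s (j + 1)) \ S (s j), fun j => (hm _).diff (hm _), ?_, ?_, ?_⟩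
  · intro i j hij
    rcases lt_or_gt_of_ne hij with h | h
    · exact hlt i j h
    · exact (hlt j i h).symm
  · apply Set.Subset.antisymm
    · exact Set.iUnion_subset (fun j => Set.sdiff_subset.trans (hsub _))
    · intro y hy
      have hex : ∃ k, y ∈ S (s k) := ⟨n, by rw [hsn, hS1]; exact hy⟩
      have hk := Nat.find_spec hex
      have hkn : Nat.find hex ≤ n := Nat.find_min' hex (by rw [hsn, hS1]; exact hy)
      have hk0 : Nat.find hex ≠ 0 := by
        intro h0
        rw [h0, hs0, hS0] at hk
        exact hk
      have hkm := Nat.find_min hex (show Nat.find hex - 1 < Nat.find hex by omega)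
      refine Set.mem_iUnion.2 ⟨⟨Nat.find hex - 1, by omega⟩, ?_, hkm⟩
      simp only
      rw [show Nat.find hex - 1 + 1 = Nat.find hex by omega]
      exact hk
  · intro i j
    have hi := h2 i (Finset.mem_univ i)
    have r1 := hsr (j + 1) j.2
    have r2 := hsr j j.2.le
    rw [int_diff (hm _) ((hInt i).mono_set (hsub _)) (hmono (hsmono (Nat.le_succ _))),
      hlin _ r1.1 r1.2 _ hi, hlin _ r2.1 r2.2 _ hi, ← hstep j]
    ring
end EFM

/-- With any number of agents having additive utilities over a finite set of
indivisible items (goods and/or chores) and cake utilities given by nonnegative integrable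
densities on `[0,1]`, an EFM allocation always exists. -/
theorem efm_exists_mixed_items_and_cake
    (n : ℕ) (hn : 0 < n) (I : Type) [Fintype I] [DecidableEq I]
    (u : Fin n → I → ℝ)
    (f : Fin n → ℝ → ℝ)
    (hf_nonneg : ∀ i x, 0 ≤ f i x)
    (hf_int : ∀ i, IntegrableOn (f i) (Set.Icc (0 : ℝ) 1)) :
    ∃ (A : Fin n → Finset I) (C : Fin n → Set ℝ),
      -- (A_1, …, A_n) is a partition of the items
      (∀ i j, i ≠ j → Disjoint (A i) (A j)) ∧
      (Finset.univ.biUnion A = Finset.univ) ∧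
      -- (C_1, …, C_n) is a measurable partition of the cake [0,1]
      (∀ i, MeasurableSet (C i)) ∧
      (∀ i j, i ≠ j → Disjoint (C i) (C j)) ∧
      ((⋃ i, C i) = Set.Icc (0 : ℝ) 1) ∧
      -- EFM
      (∀ i j : Fin n,
        (∑ t ∈ A i, u i t) + (∫ x in C i, f i x) ≥
            (∑ t ∈ A j, u i t) + (∫ x in C j, f i x) ∨
          ((∫ x in C j, f i x) = 0 ∧
            ∃ t ∈ A i ∪ A j,
              (∑ s ∈ (A i).erase t, u i s) ≥ ∑ s ∈ (A j).erase t, u i s)) := by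
  classical
  have hne : Nonempty (Fin n) := ⟨⟨0, hn⟩⟩
  set w : Fin n → ℝ := fun i => ∫ x in Set.Icc (0 : ℝ) 1, f i x with hw
  have hw0 : ∀ i, 0 ≤ w i := fun i => setIntegral_nonneg measurableSet_Icc (fun x _ => hf_nonneg i x)
  obtain ⟨lam, hlam, hlamw⟩ : ∃ lam : Fin n → ℝ, (∀ i, 0 < lam i) ∧ ∀ i, w i = 0 ∨ w i = lam i := by
    refine ⟨fun i => if w i = 0 then 1 else w i, fun i => ?_, fun i => ?_⟩
    · by_cases h : w i = 0
      · simp [h]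
      · simp only [h, if_false]; exact lt_of_le_of_ne (hw0 i) (Ne.symm h)
    · by_cases h : w i = 0
      · exact Or.inl h
      · right; simp [h]
  let v : Fin n → I → ℝ := fun i t => u i t / lam i
  have huv : ∀ i t, u i t = lam i * v i t := by
    intro i t
    simp only [v]
    have := (hlam i).ne'
    field_simp
  let K : Finset I := Finset.univ.filter (fun t => ∀ i, v i t ≤ 0)
  let G : Finset I := Finset.univ.filter (fun t => ¬ ∀ i, v i t ≤ 0)
  obtain ⟨a, hPM, hSE⟩ := EFM.core _ v K G rfl (Finset.disjoint_filter_filter_not _ _ _)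
    (fun i c hc => (Finset.mem_filter.1 hc).2 i)
    (fun g hg => by
      have := (Finset.mem_filter.1 hg).2
      push Not at this
      exact this)
  have htot : ∀ i j, ∑ t ∈ Finset.univ.filter (fun t => a t = j), u i t = lam i * EFM.tot v a K G i j := by
    intro i j
    unfold EFM.tot EFM.val
    rw [Finset.sum_filter_add_sum_filter_not, Finset.sum_filter, Finset.mul_sum]
    apply Finset.sum_congr rfl
    intro t _
    rw [huv]
    split_ifs <;> simp
  obtain ⟨p, hp⟩ := EFM.potentials (fun i j => EFM.tot v a K G i j - EFM.tot v a K G i i) (by simp)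
    (fun σ => by
      rw [Finset.sum_sub_distrib]
      linarith [hPM σ])
  obtain ⟨c, hc⟩ := EFM.level hn p
  obtain ⟨C, hC1, hC2, hC3, hC4⟩ := EFM.cake_division n f hf_nonneg hf_int
    (fun i => max (p i - c) 0) (fun i => le_max_right _ _) hc
  refine ⟨fun j => Finset.univ.filter (fun t => a t = j), C, ?_, ?_, hC1, hC2, hC3, ?_⟩
  · intro i j hij
    apply Finset.disjoint_left.2
    intro t ht ht2
    exact hij ((Finset.mem_filter.1 ht).2.symm.trans (Finset.mem_filter.1 ht2).2)
  · ext t; simp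
  · intro i j
    have hi0 : 0 ≤ ∫ x in C i, f i x := setIntegral_nonneg (hC1 i) (fun x _ => hf_nonneg i x)
    by_cases hz : ∫ x in C j, f i x = 0
    · by_cases hij : i = j
      · subst hij; left; exact le_rfl
      rcases hSE i j with h | ⟨t, ht, hti, h⟩ | ⟨t, ht, htj, h⟩
      · left
        rw [hz, htot, htot]
        have := mul_le_mul_of_nonneg_left h (hlam i).le
        linarith
      · right
        refine ⟨hz, t, Finset.mem_union_left _ (by simp [hti]), ?_⟩
        have e1 : t ∉ Finset.univ.filter (fun t => a t = j) := by
          simp [hti, hij]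
        have e2 := Finset.add_sum_erase (Finset.univ.filter (fun t => a t = i)) (fun s => u i s)
          (show t ∈ _ by simp [hti])
        rw [Finset.erase_eq_of_notMem e1, htot]
        rw [htot] at e2
        have := mul_le_mul_of_nonneg_left h (hlam i).le
        have e3 := huv i t
        linarith
      · right
        refine ⟨hz, t, Finset.mem_union_right _ (by simp [htj]), ?_⟩
        have e1 : t ∉ Finset.univ.filter (fun t => a t = i) := by
          simp [htj, Ne.symm hij]
        have e2 := Finset.add_sum_erase (Finset.univ.filter (fun t => a t = j)) (fun s => u i s)
          (show t ∈ _ by simp [htj])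
        rw [Finset.erase_eq_of_notMem e1, htot]
        rw [htot] at e2
        have := mul_le_mul_of_nonneg_left h (hlam i).le
        have e3 := huv i t
        linarith
    · left
      have hwi : w i = lam i := by
        rcases hlamw i with h | h
        · exfalso; apply hz
          rw [hC4]
          change _ * w i = 0
          rw [h, mul_zero]
        · exact h
      have hxj : max (p j - c) 0 = p j - c := by
        rcases le_total (p j - c) 0 with h | h
        · exfalso; apply hz
          rw [hC4, max_eq_right h, zero_mul]
        · exact max_eq_left h
      rw [hC4, hC4, htot, htot]
      change lam i * _ + _ * w i ≥ lam i * _ + _ * w i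
      rw [hwi, hxj]
      have h1 := hp i j
      have h2 := le_max_left (p i - c) 0
      have h3 := mul_le_mul_of_nonneg_left (show EFM.tot v a K G i j + (p j - c) ≤
        EFM.tot v a K G i i + max (p i - c) 0 by linarith) (hlam i).le
      linarith
end

section
/- For any number n of agents with additive utilities over a finite set M of indivisible items (where each item may be a good for some agents and a chore for others), there exists an allocation of M that is simultaneously EF1 and envy-freeable. -/
namespace EFProof

set_option linter.unusedSectionVars false
set_option linter.unusedFintypeInType false
set_option linter.unusedDecidableInType false

variable {n : ℕ} {I : Type} [Fintype I] [DecidableEq I]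

/-- Value for agent `i` of the bundle of agent `j` under owner map `a`, items restricted to `M`. -/
noncomputable def val (u : Fin n → I → ℝ) (M : Finset I) (a : I → Fin n) (i j : Fin n) : ℝ :=
  ∑ t ∈ M, if a t = j then u i t else 0

/-- The assignment is welfare-maximal under permutations of the bundles. -/
def PM (u : Fin n → I → ℝ) (M : Finset I) (a : I → Fin n) : Prop :=
  ∀ σ : Equiv.Perm (Fin n), ∑ t ∈ M, u (σ (a t)) t ≤ ∑ t ∈ M, u (a t) t

/-- Strengthened EF1. -/
def EFS (u : Fin n → I → ℝ) (M : Finset I) (a : I → Fin n) : Prop :=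
  ∀ i j, val u M a i j ≤ val u M a i i ∨
    (∃ x ∈ M, a x = j ∧ 0 < u i x ∧ val u M a i j - u i x ≤ val u M a i i) ∨
    (∃ x ∈ M, a x = i ∧ (∀ k, u k x ≤ 0) ∧ val u M a i j ≤ val u M a i i - u i x)

/-- Glue two owner maps. -/
def glue (M : Finset I) (a b : I → Fin n) : I → Fin n := fun t => if t ∈ M then a t else b t

lemma val_congr {u : Fin n → I → ℝ} {M : Finset I} {a b : I → Fin n}
    (h : ∀ t ∈ M, a t = b t) (i j) : val u M a i j = val u M b i j := by
  unfold val
  exact Finset.sum_congr rfl fun t ht => by rw [h t ht]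

lemma sum_glue {M₁ M₂ : Finset I} (hd : Disjoint M₁ M₂) (a b : I → Fin n)
    (f : Fin n → I → ℝ) :
    ∑ t ∈ M₁ ∪ M₂, f (glue M₁ a b t) t = ∑ t ∈ M₁, f (a t) t + ∑ t ∈ M₂, f (b t) t := by
  rw [Finset.sum_union hd]
  congr 1
  · exact Finset.sum_congr rfl fun t ht => by simp [glue, ht]
  · refine Finset.sum_congr rfl fun t ht => ?_
    have : t ∉ M₁ := fun h => Finset.disjoint_left.1 hd h ht
    simp [glue, this]

lemma val_glue {M₁ M₂ : Finset I} (hd : Disjoint M₁ M₂) (u : Fin n → I → ℝ) (a b : I → Fin n)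
    (i j) : val u (M₁ ∪ M₂) (glue M₁ a b) i j = val u M₁ a i j + val u M₂ b i j :=
  sum_glue hd a b (fun k t => if k = j then u i t else 0)

lemma PM_glue {M₁ M₂ : Finset I} (hd : Disjoint M₁ M₂) {u : Fin n → I → ℝ} {a b : I → Fin n}
    (h₁ : PM u M₁ a) (h₂ : PM u M₂ b) : PM u (M₁ ∪ M₂) (glue M₁ a b) := by
  intro σ
  have e1 := sum_glue hd a b (fun k t => u (σ k) t)
  have e2 := sum_glue hd a b u
  have := h₁ σ
  have := h₂ σ
  linarith

lemma val_single {u : Fin n → I → ℝ} {R : Finset I} {a : I → Fin n} (ha : Set.InjOn a R)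
    {t : I} (ht : t ∈ R) (i) : val u R a i (a t) = u i t := by
  unfold val
  rw [Finset.sum_eq_single t]
  · simp
  · intro b hb hne
    rw [if_neg]
    exact fun h => hne (ha hb ht h)
  · exact fun h => absurd ht h

lemma val_none {u : Fin n → I → ℝ} {R : Finset I} {a : I → Fin n} {j}
    (h : ∀ t ∈ R, a t ≠ j) (i) : val u R a i j = 0 :=
  Finset.sum_eq_zero fun t ht => if_neg (h t ht)

lemma sum_split (u : Fin n → I → ℝ) (R : Finset I) (a : I → Fin n) (i) :
    ∑ t ∈ R, u (a t) t = val u R a i i + ∑ t ∈ R with a t ≠ i, u (a t) t := by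
  unfold val
  rw [Finset.sum_filter, ← Finset.sum_add_distrib]
  refine Finset.sum_congr rfl fun t _ => ?_
  by_cases h : a t = i <;> simp [h]

lemma sum_insert_update (u : Fin n → I → ℝ) (R : Finset I) (a : I → Fin n) (i) {s : I}
    (hs : s ∉ R) :
    ∑ t ∈ insert s R, u (Function.update a s i t) t = u i s + ∑ t ∈ R, u (a t) t := by
  rw [Finset.sum_insert hs]
  congr 1
  · simp
  · refine Finset.sum_congr rfl fun t ht => ?_
    rw [Function.update_of_ne]
    rintro rfl; exact hs ht

lemma sum_update_notMem (u : Fin n → I → ℝ) (R : Finset I) (a : I → Fin n) (i) {s : I}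
    (hs : s ∉ R) :
    ∑ t ∈ R, u (Function.update a s i t) t = ∑ t ∈ R, u (a t) t := by
  refine Finset.sum_congr rfl fun t ht => ?_
  rw [Function.update_of_ne]
  rintro rfl; exact hs ht

/-- One round of maximum weight matching for goods. -/
lemma goods_round (hn : 0 < n) (u : Fin n → I → ℝ) (P : Finset I) :
    ∃ (R : Finset I) (a : I → Fin n), R ⊆ P ∧ Set.InjOn a R ∧ PM u R a ∧
      (∀ i, 0 ≤ val u R a i i) ∧ (∀ i, ∀ s ∈ P, s ∉ R → u i s ≤ val u R a i i) := by
  obtain ⟨⟨R, a⟩, ⟨hRP, hinj⟩, hmax⟩ := Set.exists_max_image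
    {x : Finset I × (I → Fin n) | x.1 ⊆ P ∧ Set.InjOn x.2 x.1}
    (fun x => ∑ t ∈ x.1, u (x.2 t) t) (Set.toFinite _)
    ⟨(∅, fun _ => ⟨0, hn⟩), by simp⟩
  simp only at hRP hinj hmax
  refine ⟨R, a, hRP, hinj, ?_, ?_, ?_⟩
  · intro σ
    exact hmax (R, fun t => σ (a t)) ⟨hRP, fun x hx y hy h => hinj hx hy (σ.injective h)⟩
  · intro i
    have := hmax (R.filter (a · ≠ i), a)
      ⟨(Finset.filter_subset _ _).trans hRP, hinj.mono (Finset.coe_subset.2 (Finset.filter_subset _ _))⟩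
    simp only at this
    rw [sum_split u R a i] at this
    linarith
  · intro i s hs hsR
    have hs' : s ∉ R.filter (a · ≠ i) := fun h => hsR (Finset.mem_filter.1 h).1
    have := hmax (insert s (R.filter (a · ≠ i)), Function.update a s i) ⟨?_, ?_⟩
    · simp only at this
      rw [sum_insert_update u _ a i hs', sum_split u R a i] at this
      linarith
    · intro x hx
      rcases Finset.mem_insert.1 hx with rfl | hx
      · exact hs
      · exact hRP (Finset.mem_filter.1 hx).1
    · intro x hx y hy hxy
      simp only [Finset.coe_insert, Finset.coe_filter, Set.mem_insert_iff, Set.mem_ofPred_eq]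
        at hx hy
      simp only at hxy
      by_cases hxs : x = s <;> by_cases hys : y = s
      · rw [hxs, hys]
      · subst hxs
        rw [Function.update_self, Function.update_of_ne hys] at hxy
        rcases hy with hy | hy
        · exact hy.symm
        · exact absurd hxy.symm hy.2
      · subst hys
        rw [Function.update_self, Function.update_of_ne hxs] at hxy
        rcases hx with hx | hx
        · exact hx
        · exact absurd hxy hx.2
      · rw [Function.update_of_ne hxs, Function.update_of_ne hys] at hxy
        exact hinj (hx.resolve_left hxs).1 (hy.resolve_left hys).1 hxy

lemma goods (hn : 0 < n) (u : Fin n → I → ℝ) : ∀ (k : ℕ) (P : Finset I), P.card = k →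
    (∀ t ∈ P, ∃ i, 0 < u i t) →
    ∃ a : I → Fin n, PM u P a ∧ (∀ i, 0 ≤ val u P a i i) ∧
      (∀ i j B, 0 ≤ B → (∀ s ∈ P, u i s ≤ B) → val u P a i j ≤ val u P a i i + B) ∧
      (∀ i j, val u P a i j ≤ val u P a i i ∨
        (∃ x ∈ P, a x = j ∧ 0 < u i x ∧ val u P a i j - u i x ≤ val u P a i i)) := by
  intro k
  induction k using Nat.strong_induction_on with
  | _ k ih =>
  intro P hk hP
  by_cases hne : P = ∅
  · subst hne
    refine ⟨fun _ => ⟨0, hn⟩, ?_, ?_, ?_, ?_⟩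
    · intro σ; simp
    · intro i; simp [val]
    · intro i j B hB _; simpa [val] using hB
    · intro i j; left; simp [val]
  obtain ⟨R, a, hRP, hinj, hpm, h0, hex⟩ := goods_round hn u P
  have hRne : R.Nonempty := by
    rw [Finset.nonempty_iff_ne_empty]
    rintro rfl
    obtain ⟨t, ht⟩ := Finset.nonempty_iff_ne_empty.2 hne
    obtain ⟨i, hi⟩ := hP t ht
    have := hex i t ht (by simp)
    simp [val] at this
    linarith
  have hcard : (P \ R).card < k := by
    rw [← hk]
    apply Finset.card_lt_card
    refine ⟨Finset.sdiff_subset, fun h => ?_⟩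
    obtain ⟨t, ht⟩ := hRne
    exact (Finset.mem_sdiff.1 (h (hRP ht))).2 ht
  obtain ⟨b, hb1, hb2, hb3, -⟩ := ih _ hcard (P \ R) rfl
    (fun t ht => hP t (Finset.mem_sdiff.1 ht).1)
  have hd : Disjoint R (P \ R) := Finset.disjoint_sdiff
  have hU : R ∪ (P \ R) = P := Finset.union_sdiff_of_subset hRP
  have hv := fun i j => val_glue hd u a b i j
  have hp := PM_glue hd hpm hb1
  rw [hU] at hp
  simp only [hU] at hv
  have key : ∀ i j, val u (P \ R) b i j ≤ val u (P \ R) b i i + val u R a i i := fun i j =>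
    hb3 i j _ (h0 i) fun s hs => hex i s (Finset.mem_sdiff.1 hs).1 (Finset.mem_sdiff.1 hs).2
  refine ⟨glue R a b, hp, ?_, ?_, ?_⟩
  · intro i; rw [hv]; linarith [h0 i, hb2 i]
  · intro i j B hB hs
    rw [hv, hv]
    have h1 : val u R a i j ≤ B := by
      by_cases h : ∃ t ∈ R, a t = j
      · obtain ⟨t, ht, rfl⟩ := h
        rw [val_single hinj ht]; exact hs t (hRP ht)
      · push Not at h
        rw [val_none h]; exact hB
    linarith [key i j]
  · intro i j
    rw [hv, hv]
    by_cases h : ∃ t ∈ R, a t = j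
    · obtain ⟨t, ht, rfl⟩ := h
      rw [val_single hinj ht]
      by_cases hpos : 0 < u i t
      · right
        refine ⟨t, hRP ht, by simp [glue, ht], hpos, ?_⟩
        linarith [key i (a t)]
      · left; linarith [key i (a t)]
    · push Not at h
      rw [val_none h]
      left; linarith [key i j]

/-- The first stage: `r` chores to distinct agents, with optional extra items to these agents. -/
lemma stage_one (hn : 0 < n) (u : Fin n → I → ℝ) (C P : Finset I) (hCP : Disjoint C P) (r : ℕ)
    (hr : r ≤ n) (hrC : r ≤ C.card) :
    ∃ (R Q : Finset I) (a : I → Fin n), R ⊆ C ∧ Q ⊆ P ∧ R.card = r ∧ Set.InjOn a R ∧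
      (∀ q ∈ Q, ∃ t ∈ R, a t = a q) ∧ PM u (R ∪ Q) a ∧
      (∀ i, 0 ≤ val u Q a i i) ∧
      (∀ t ∈ R, ∀ p ∈ P, p ∉ Q → u (a t) p ≤ 0) ∧
      (∀ t ∈ R, ∀ s ∈ C, s ∉ R → u (a t) s ≤ u (a t) t) := by
  obtain ⟨⟨R, Q, a⟩, ⟨hRC, hQP, hRr, hinj, hQ⟩, hmax⟩ := Set.exists_max_image
    {x : Finset I × Finset I × (I → Fin n) | x.1 ⊆ C ∧ x.2.1 ⊆ P ∧ x.1.card = r ∧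
      Set.InjOn x.2.2 x.1 ∧ ∀ q ∈ x.2.1, ∃ t ∈ x.1, x.2.2 t = x.2.2 q}
    (fun x => ∑ t ∈ x.1, u (x.2.2 t) t + ∑ t ∈ x.2.1, u (x.2.2 t) t) (Set.toFinite _) (by
      obtain ⟨R, hRC, hRr⟩ := Finset.exists_subset_card_eq hrC
      have : ∃ f : R → Fin n, Function.Injective f := by
        have : Fintype.card R ≤ Fintype.card (Fin n) := by simp [hRr, hr]
        obtain ⟨f⟩ := Function.Embedding.nonempty_of_card_le this
        exact ⟨f, f.injective⟩
      obtain ⟨f, hf⟩ := this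
      refine ⟨(R, ∅, fun t => if h : t ∈ R then f ⟨t, h⟩ else ⟨0, hn⟩), hRC, by simp, hRr, ?_,
        by simp⟩
      intro x hx y hy hxy
      have hx' : x ∈ R := hx
      have hy' : y ∈ R := hy
      simp only [hx', hy', dif_pos] at hxy
      simpa using hf hxy)
  simp only at hRC hQP hRr hinj hQ hmax
  have hRQ : Disjoint R Q := Finset.disjoint_of_subset_left hRC
    (Finset.disjoint_of_subset_right hQP hCP)
  refine ⟨R, Q, a, hRC, hQP, hRr, hinj, hQ, ?_, ?_, ?_, ?_⟩
  · intro σ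
    rw [Finset.sum_union hRQ, Finset.sum_union hRQ]
    refine hmax (R, Q, fun t => σ (a t)) ⟨hRC, hQP, hRr,
      fun x hx y hy h => hinj hx hy (σ.injective h), ?_⟩
    intro q hq
    obtain ⟨t, ht, h⟩ := hQ q hq
    exact ⟨t, ht, congrArg σ h⟩
  · intro i
    have := hmax (R, Q.filter (a · ≠ i), a)
      ⟨hRC, (Finset.filter_subset _ _).trans hQP, hRr, hinj,
        fun q hq => hQ q (Finset.mem_filter.1 hq).1⟩
    simp only at this
    rw [sum_split u Q a i] at this
    linarith
  · intro t ht p hp hpQ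
    have hpR : p ∉ R := fun h => Finset.disjoint_left.1 hCP (hRC h) hp
    have hup : ∀ x ∈ R, Function.update a p (a t) x = a x := fun x hx => by
      rw [Function.update_of_ne]; rintro rfl; exact hpR hx
    have := hmax (R, insert p Q, Function.update a p (a t)) ⟨hRC, ?_, hRr, ?_, ?_⟩
    · simp only at this
      rw [sum_insert_update u _ a _ hpQ, sum_update_notMem u _ a _ hpR] at this
      linarith
    · exact Finset.insert_subset hp hQP
    · intro x hx y hy hxy
      simp only at hxy
      rw [hup x hx, hup y hy] at hxy
      exact hinj hx hy hxy
    · intro q hq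
      simp only at hq ⊢
      by_cases hqp : q = p
      · subst hqp
        exact ⟨t, ht, by rw [hup t ht]; simp⟩
      · obtain ⟨x, hx, h⟩ := hQ q ((Finset.mem_insert.1 hq).resolve_left hqp)
        exact ⟨x, hx, by rw [hup x hx, Function.update_of_ne hqp, h]⟩
  · intro t ht s hs hsR
    have hsQ : s ∉ Q := fun h => Finset.disjoint_left.1 hCP hs (hQP h)
    have hsE : s ∉ R.erase t := fun h => hsR (Finset.mem_of_mem_erase h)
    have hup : ∀ x, x ≠ s → Function.update a s (a t) x = a x := fun x hx =>
      Function.update_of_ne hx _ _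
    have := hmax (insert s (R.erase t), Q, Function.update a s (a t)) ⟨?_, hQP, ?_, ?_, ?_⟩
    · simp only at this
      rw [sum_insert_update u _ a _ hsE, sum_update_notMem u _ a _ hsQ,
        ← Finset.add_sum_erase R _ ht] at this
      linarith
    · exact Finset.insert_subset hs ((Finset.erase_subset _ _).trans hRC)
    · simp only
      rw [Finset.card_insert_of_notMem hsE, Finset.card_erase_add_one ht, hRr]
    · intro x hx y hy hxy
      simp only [Finset.coe_insert, Finset.coe_erase, Set.mem_insert_iff, Set.mem_sdiff,
        Set.mem_singleton_iff, Finset.mem_coe] at hx hy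
      by_cases hxs : x = s <;> by_cases hys : y = s
      · rw [hxs, hys]
      · subst hxs
        simp only [Function.update_self, hup y hys] at hxy
        have hy' := hy.resolve_left hys
        exact absurd (hinj ht hy'.1 hxy).symm hy'.2
      · subst hys
        simp only [Function.update_self, hup x hxs] at hxy
        have hx' := hx.resolve_left hxs
        exact absurd (hinj hx'.1 ht hxy) hx'.2
      · simp only [hup x hxs, hup y hys] at hxy
        exact hinj (hx.resolve_left hxs).1 (hy.resolve_left hys).1 hxy
    · intro q hq
      simp only at hq ⊢
      have hqs : q ≠ s := by rintro rfl; exact hsQ hq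
      obtain ⟨x, hx, h⟩ := hQ q hq
      by_cases hxt : x = t
      · subst hxt
        exact ⟨s, by simp, by rw [hup q hqs]; simp [h]⟩
      · refine ⟨x, by simp [hxt, hx], ?_⟩
        rw [hup q hqs, hup x (by rintro rfl; exact hsR hx), h]

lemma chores (hn : 0 < n) (u : Fin n → I → ℝ) : ∀ (k : ℕ) (C : Finset I), C.card = n * k →
    ∃ a : I → Fin n, PM u C a ∧
      ∀ i, C = ∅ ∨ ∃ z ∈ C, a z = i ∧ ∀ j B, (∀ s ∈ C, u i s ≤ B) →
        val u C a i j ≤ val u C a i i - u i z + B := by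
  intro k
  induction k with
  | zero =>
    intro C hC
    have : C = ∅ := by simpa using hC
    subst this
    exact ⟨fun _ => ⟨0, hn⟩, fun σ => by simp, fun i => Or.inl rfl⟩
  | succ k ih =>
    intro C hC
    obtain ⟨R, Q, a, hRC, hQ, hRn, hinj, -, hpm, -, -, hex⟩ :=
      stage_one hn u C ∅ (by simp) n le_rfl (by rw [hC]; nlinarith)
    have hQ0 : Q = ∅ := Finset.subset_empty.1 hQ
    subst hQ0
    rw [Finset.union_empty] at hpm
    have hsurj : ∀ j, ∃ t ∈ R, a t = j := by
      intro j
      have : R.image a = Finset.univ := by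
        apply Finset.eq_univ_of_card
        rw [Finset.card_image_of_injOn hinj, hRn, Fintype.card_fin]
      have hj : j ∈ R.image a := by rw [this]; simp
      simpa using hj
    obtain ⟨b, hb1, hb2⟩ := ih (C \ R) (by
      rw [Finset.card_sdiff_of_subset hRC, hC, hRn, Nat.mul_succ]; omega)
    have hd : Disjoint R (C \ R) := Finset.disjoint_sdiff
    have hU : R ∪ (C \ R) = C := Finset.union_sdiff_of_subset hRC
    have hv := fun i j => val_glue hd u a b i j
    have hp := PM_glue hd hpm hb1
    rw [hU] at hp
    simp only [hU] at hv
    refine ⟨glue R a b, hp, fun i => Or.inr ?_⟩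
    obtain ⟨t, ht, rfl⟩ := hsurj i
    rcases hb2 (a t) with h0 | ⟨z, hz, hzi, hzB⟩
    · refine ⟨t, hRC ht, by simp [glue, ht], fun j B hB => ?_⟩
      obtain ⟨t', ht', rfl⟩ := hsurj j
      rw [hv, hv, val_single hinj ht, val_single hinj ht', h0]
      simp only [val, Finset.sum_empty]
      linarith [hB t' (hRC ht')]
    · have hz' := Finset.mem_sdiff.1 hz
      refine ⟨z, hz'.1, by simp [glue, hz'.2, hzi], fun j B hB => ?_⟩
      obtain ⟨t', ht', rfl⟩ := hsurj j
      rw [hv, hv, val_single hinj ht, val_single hinj ht']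
      have := hzB (a t') (u (a t) t) fun s hs =>
        hex t ht s (Finset.mem_sdiff.1 hs).1 (Finset.mem_sdiff.1 hs).2
      linarith [hB t' (hRC ht')]


lemma val_le_sum (u : Fin n → I → ℝ) (P : Finset I) (a : I → Fin n) (i j : Fin n) :
    val u P a i j = ∑ t ∈ P with a t = j, u i t := by
  unfold val; rw [Finset.sum_filter]

lemma terminal (hn : 0 < n) (u : Fin n → I → ℝ) (C P : Finset I) (hCP : Disjoint C P)
    (hC : ∀ t ∈ C, ∀ i, u i t ≤ 0) (hP : ∀ t ∈ P, ∃ i, 0 < u i t)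
    (H : ∀ c ∈ C, ∀ P₀ ⊆ P, ∀ i, u i c + ∑ t ∈ P₀, u i t ≤ 0) :
    ∃ a : I → Fin n, PM u (C ∪ P) a ∧ EFS u (C ∪ P) a := by
  by_cases hCe : C = ∅
  · subst hCe
    obtain ⟨a, h1, -, -, h4⟩ := goods hn u _ P rfl hP
    rw [Finset.empty_union]
    refine ⟨a, h1, fun i j => ?_⟩
    rcases h4 i j with h | h
    · exact Or.inl h
    · exact Or.inr (Or.inl h)
  have hm : 0 < C.card := Finset.card_pos.2 (Finset.nonempty_iff_ne_empty.2 hCe)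
  have hmod := Nat.mod_lt (C.card - 1) hn
  have hdiv := Nat.div_add_mod (C.card - 1) n
  have hmle := Nat.mod_le (C.card - 1) n
  obtain ⟨R, Q, a, hRC, hQP, hRr, hinj, hQR, hpm, hQ0, hPR, hex⟩ :=
    stage_one hn u C P hCP ((C.card - 1) % n + 1) (by omega) (by omega)
  obtain ⟨b, hb1, hb2, -, hb4⟩ := goods hn u _ (P \ Q) rfl
    (fun t ht => hP t (Finset.mem_sdiff.1 ht).1)
  obtain ⟨d, hd1, hd2⟩ := chores hn u ((C.card - 1) / n) (C \ R) (by
    rw [Finset.card_sdiff_of_subset hRC, hRr]; omega)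
  have hRQ : Disjoint R Q := Finset.disjoint_of_subset_left hRC
    (Finset.disjoint_of_subset_right hQP hCP)
  have hD1 : Disjoint (R ∪ Q) (P \ Q) := by
    rw [Finset.disjoint_left]
    intro x hx hx'
    rw [Finset.mem_sdiff] at hx'
    rcases Finset.mem_union.1 hx with h | h
    · exact Finset.disjoint_left.1 hCP (hRC h) hx'.1
    · exact hx'.2 h
  have hD2 : Disjoint ((R ∪ Q) ∪ (P \ Q)) (C \ R) := by
    rw [Finset.disjoint_left]
    intro x hx hx'
    rw [Finset.mem_sdiff] at hx'
    rcases Finset.mem_union.1 hx with h | h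
    · rcases Finset.mem_union.1 h with h | h
      · exact hx'.2 h
      · exact Finset.disjoint_left.1 hCP hx'.1 (hQP h)
    · exact Finset.disjoint_left.1 hCP hx'.1 (Finset.mem_sdiff.1 h).1
  have hU : ((R ∪ Q) ∪ (P \ Q)) ∪ (C \ R) = C ∪ P := by
    ext x
    have h1 := @hRC x
    have h2 := @hQP x
    simp only [Finset.mem_union, Finset.mem_sdiff]
    tauto
  have hp := PM_glue hD2 (PM_glue hD1 hpm hb1) hd1
  have hv := fun i j => val_glue hD2 u (glue (R ∪ Q) a b) d i j
  have hv2 := fun i j => val_glue hD1 u a b i j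
  have hv3 : ∀ i j, val u (R ∪ Q) a i j = val u R a i j + val u Q a i j := fun i j =>
    Finset.sum_union hRQ
  rw [hU] at hp
  simp only [hU, hv2, hv3] at hv
  set g := glue ((R ∪ Q) ∪ (P \ Q)) (glue (R ∪ Q) a b) d with hg
  have gR : ∀ t ∈ R, g t = a t := fun t ht => by simp [hg, glue, ht]
  have gP : ∀ t ∈ P \ Q, g t = b t := fun t ht => by
    have h1 : t ∉ R ∪ Q := fun h => Finset.disjoint_left.1 hD1 h ht
    have h2 : t ∈ (R ∪ Q) ∪ (P \ Q) := Finset.mem_union_right _ ht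
    rw [hg]; unfold glue; rw [if_pos h2, if_neg h1]
  have gC : ∀ t ∈ C \ R, g t = d t := fun t ht => by
    have h2 : t ∉ (R ∪ Q) ∪ (P \ Q) := fun h => Finset.disjoint_left.1 hD2 h ht
    rw [hg]; unfold glue; rw [if_neg h2]
  refine ⟨g, hp, fun i j => ?_⟩
  rw [hv, hv]
  -- value of extra items, in terms of a subset of `P`
  have hsub : ∀ c ∈ C, u i c + (val u Q a i j + val u (P \ Q) b i j) ≤ 0 := by
    intro c hc
    have hdis : Disjoint (Q.filter (a · = j)) ((P \ Q).filter (b · = j)) :=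
      Finset.disjoint_of_subset_left (Finset.filter_subset _ _)
        (Finset.disjoint_of_subset_right (Finset.filter_subset _ _) Finset.disjoint_sdiff)
    have := H c hc (Q.filter (a · = j) ∪ (P \ Q).filter (b · = j)) (by
      apply Finset.union_subset
      · exact (Finset.filter_subset _ _).trans hQP
      · exact (Finset.filter_subset _ _).trans Finset.sdiff_subset) i
    rw [Finset.sum_union hdis, ← val_le_sum, ← val_le_sum] at this
    exact this
  have hQi := hQ0 i
  have hPi := hb2 i
  -- own first-round chore value is at most zero
  have hci : val u R a i i ≤ 0 := Finset.sum_nonpos fun t ht => by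
    split_ifs
    · exact hC t (hRC ht) i
    · exact le_rfl
  have hrest : ∀ s ∈ C \ R, u i s ≤ val u R a i i := by
    intro s hs
    have hs' := Finset.mem_sdiff.1 hs
    by_cases h : ∃ t ∈ R, a t = i
    · obtain ⟨t, ht, rfl⟩ := h
      rw [val_single hinj ht]
      exact hex t ht s hs'.1 hs'.2
    · push Not at h
      rw [val_none h]; exact hC s hs'.1 i
  -- if the stage-one part of `j` together with the leftovers is nonpositive we are done
  have main : val u R a i j + val u Q a i j + val u (P \ Q) b i j ≤ 0 →
      (val u R a i j + val u Q a i j + val u (P \ Q) b i j + val u (C \ R) d i j ≤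
        val u R a i i + val u Q a i i + val u (P \ Q) b i i + val u (C \ R) d i i) ∨
      (∃ x ∈ C ∪ P, g x = i ∧ (∀ k, u k x ≤ 0) ∧
        val u R a i j + val u Q a i j + val u (P \ Q) b i j + val u (C \ R) d i j ≤
        val u R a i i + val u Q a i i + val u (P \ Q) b i i + val u (C \ R) d i i - u i x) := by
    intro hle
    rcases hd2 i with h0 | ⟨z, hz, hzi, hzB⟩
    · have e : ∀ j, val u (C \ R) d i j = 0 := fun j => by rw [h0]; simp [val]
      rw [e, e]
      by_cases h : ∃ t ∈ R, a t = i
      · obtain ⟨t, ht, hti⟩ := h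
        right
        refine ⟨t, Finset.mem_union_left _ (hRC ht), by rw [gR t ht, hti], hC t (hRC ht), ?_⟩
        have : val u R a i i = u i t := by
          have := val_single (u := u) hinj ht i
          rwa [hti] at this
        linarith
      · push Not at h
        left
        rw [val_none h]
        linarith
    · right
      have hz' := Finset.mem_sdiff.1 hz
      refine ⟨z, Finset.mem_union_left _ hz'.1, by rw [gC z hz, hzi], hC z hz'.1, ?_⟩
      have := hzB j _ hrest
      linarith
  by_cases hj : ∃ t ∈ R, a t = j
  · have : val u R a i j + val u Q a i j + val u (P \ Q) b i j ≤ 0 := by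
      obtain ⟨t, ht, rfl⟩ := hj
      rw [val_single hinj ht]
      linarith [hsub t (hRC ht)]
    rcases main this with h | h
    · exact Or.inl h
    · exact Or.inr (Or.inr h)
  · push Not at hj
    have hQj : val u Q a i j = 0 := val_none (fun q hq hqj => by
      obtain ⟨t, ht, h⟩ := hQR q hq
      exact hj t ht (h.trans hqj)) i
    have hRj : val u R a i j = 0 := val_none hj i
    by_cases hi : ∃ t ∈ R, a t = i
    · have : val u R a i j + val u Q a i j + val u (P \ Q) b i j ≤ 0 := by
        rw [hQj, hRj]
        have : val u (P \ Q) b i j ≤ 0 := Finset.sum_nonpos fun p hp => by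
          obtain ⟨t, ht, rfl⟩ := hi
          have hp' := Finset.mem_sdiff.1 hp
          split_ifs
          · exact hPR t ht p hp'.1 hp'.2
          · exact le_rfl
        linarith
      rcases main this with h | h
      · exact Or.inl h
      · exact Or.inr (Or.inr h)
    · push Not at hi
      have hRi : val u R a i i = 0 := val_none hi i
      rcases hd2 i with h0 | ⟨z, hz, hzi, hzB⟩
      · have e : ∀ j, val u (C \ R) d i j = 0 := fun j => by rw [h0]; simp [val]
        rw [e, e]
        rcases hb4 i j with h | ⟨x, hx, hxj, hpos, hle⟩
        · left; linarith
        · right; left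
          exact ⟨x, Finset.mem_union_right _ (Finset.mem_sdiff.1 hx).1, by rw [gP x hx, hxj],
            hpos, by linarith⟩
      · right; right
        have hz' := Finset.mem_sdiff.1 hz
        refine ⟨z, Finset.mem_union_left _ hz'.1, by rw [gC z hz, hzi], hC z hz'.1, ?_⟩
        obtain ⟨s, hs, hsmax⟩ := Finset.exists_max_image (C \ R) (u i) ⟨z, hz⟩
        have h1 := hzB j _ hsmax
        have h2 := hsub s (Finset.mem_sdiff.1 hs).1
        linarith

lemma sum_merge (f : Fin n → I → ℝ) (M P₀ : Finset I) (c : I) (hPM : P₀ ⊆ M) (hc : c ∈ M)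
    (hcP : c ∉ P₀) (a' : I → Fin n) :
    ∑ t ∈ M, f (if t ∈ P₀ then a' c else a' t) t =
      ∑ t ∈ M \ P₀, (if t = c then f (a' t) c + ∑ p ∈ P₀, f (a' t) p else f (a' t) t) := by
  have hc' : c ∈ M \ P₀ := Finset.mem_sdiff.2 ⟨hc, hcP⟩
  rw [← Finset.sum_sdiff hPM, ← Finset.add_sum_erase _ _ hc', ← Finset.add_sum_erase _ _ hc']
  have h1 : ∑ x ∈ P₀, f (if x ∈ P₀ then a' c else a' x) x = ∑ x ∈ P₀, f (a' c) x :=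
    Finset.sum_congr rfl fun x hx => by rw [if_pos hx]
  have h2 : ∑ x ∈ (M \ P₀).erase c, f (if x ∈ P₀ then a' c else a' x) x =
      ∑ t ∈ (M \ P₀).erase c,
        (if t = c then f (a' t) c + ∑ p ∈ P₀, f (a' t) p else f (a' t) t) := by
    refine Finset.sum_congr rfl fun x hx => ?_
    have hx' := Finset.mem_erase.1 hx
    rw [if_neg (Finset.mem_sdiff.1 hx'.2).2, if_neg hx'.1]
  rw [h1, h2, if_neg hcP, if_pos rfl]
  ring

lemma main_aux (hn : 0 < n) : ∀ (k : ℕ) (M : Finset I), M.card = k → ∀ u : Fin n → I → ℝ,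
    ∃ a : I → Fin n, PM u M a ∧ EFS u M a := by
  intro k
  induction k using Nat.strong_induction_on with
  | _ k ih =>
  intro M hk u
  set C := M.filter (fun t => ∀ i, u i t ≤ 0) with hCdef
  set P := M.filter (fun t => ¬ ∀ i, u i t ≤ 0) with hPdef
  have hCP : Disjoint C P := Finset.disjoint_filter_filter_not _ _ _
  have hU : C ∪ P = M := Finset.filter_union_filter_not_eq _ _
  by_cases hT : ∀ c ∈ C, ∀ P₀ ⊆ P, ∀ i, u i c + ∑ t ∈ P₀, u i t ≤ 0
  · have := terminal hn u C P hCP (fun t ht => (Finset.mem_filter.1 ht).2)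
      (fun t ht => by simpa using (Finset.mem_filter.1 ht).2) hT
    rwa [hU] at this
  push Not at hT
  obtain ⟨c, hc, P₁, hP₁, i₁, hi₁⟩ := hT
  obtain ⟨P₀, ⟨hP₀, i₀, hi₀⟩, hmin⟩ := Set.exists_min_image
    {P₀ : Finset I | P₀ ⊆ P ∧ ∃ i, 0 < u i c + ∑ t ∈ P₀, u i t} Finset.card (Set.toFinite _)
    ⟨P₁, hP₁, i₁, hi₁⟩
  have hcM : c ∈ M := (Finset.mem_filter.1 hc).1
  have hcle : ∀ i, u i c ≤ 0 := (Finset.mem_filter.1 hc).2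
  have hcP : c ∉ P₀ := fun h => Finset.disjoint_left.1 hCP hc (hP₀ h)
  have hPM : P₀ ⊆ M := hP₀.trans (Finset.filter_subset _ _)
  have hne : P₀.Nonempty := by
    rw [Finset.nonempty_iff_ne_empty]
    rintro rfl
    simp at hi₀
    linarith [hcle i₀]
  obtain ⟨p, hp⟩ := hne
  have hpmin : ∀ i, u i c + ∑ t ∈ P₀.erase p, u i t ≤ 0 := by
    intro i
    by_contra hcon
    push Not at hcon
    have := hmin (P₀.erase p) ⟨(Finset.erase_subset _ _).trans hP₀, i, hcon⟩
    have := Finset.card_erase_lt_of_mem hp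
    omega
  have hcard : (M \ P₀).card < k := by
    rw [← hk]
    apply Finset.card_lt_card
    exact ⟨Finset.sdiff_subset, fun h => (Finset.mem_sdiff.1 (h (hPM hp))).2 hp⟩
  set u' : Fin n → I → ℝ := fun k t => if t = c then u k c + ∑ p ∈ P₀, u k p else u k t with hu'
  obtain ⟨a', hpm, hef⟩ := ih _ hcard (M \ P₀) rfl u'
  set a : I → Fin n := fun t => if t ∈ P₀ then a' c else a' t with ha
  have hval : ∀ i j, val u M a i j = val u' (M \ P₀) a' i j := by
    intro i j
    have := sum_merge (fun k t => if k = j then u i t else 0) M P₀ c hPM hcM hcP a'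
    unfold val
    rw [ha, this]
    refine Finset.sum_congr rfl fun t _ => ?_
    by_cases h1 : t = c <;> by_cases h2 : a' t = j <;> simp [hu', h1, h2]
    all_goals (subst h1; simp [h2])
  have hmem : ∀ x ∈ M \ P₀, x ∈ M ∧ a x = a' x := fun x hx => by
    have := Finset.mem_sdiff.1 hx
    exact ⟨this.1, by simp [ha, this.2]⟩
  refine ⟨a, ?_, ?_⟩
  · intro σ
    have h1 := sum_merge (fun k t => u (σ k) t) M P₀ c hPM hcM hcP a'
    have h2 := sum_merge u M P₀ c hPM hcM hcP a'
    have h3 := hpm σ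
    simp only [hu'] at h3
    simp only [ha]
    rw [h1, h2]
    exact h3
  · intro i j
    rw [hval, hval]
    rcases hef i j with h | ⟨x, hx, hxj, hpos, hle⟩ | ⟨x, hx, hxi, hneg, hle⟩
    · exact Or.inl h
    · right; left
      by_cases hxc : x = c
      · subst hxc
        have e : u' i x = u i x + ∑ p ∈ P₀, u i p := by simp [hu']
        rw [e] at hpos hle
        have h1 := hpmin i
        rw [← Finset.add_sum_erase _ _ hp] at hpos hle
        refine ⟨p, hPM hp, by simp [ha, hp, hxj], by linarith, by linarith⟩
      · have e : u' i x = u i x := by simp [hu', hxc]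
        rw [e] at hpos hle
        exact ⟨x, (hmem x hx).1, by rw [(hmem x hx).2, hxj], hpos, hle⟩
    · right; right
      by_cases hxc : x = c
      · subst hxc
        have := hneg i₀
        have e : u' i₀ x = u i₀ x + ∑ p ∈ P₀, u i₀ p := by simp [hu']
        rw [e] at this
        linarith
      · have e : ∀ k, u' k x = u k x := fun k => by simp [hu', hxc]
        simp only [e] at hneg hle
        exact ⟨x, (hmem x hx).1, by rw [(hmem x hx).2, hxi], hneg, hle⟩

/-- Weight of a path. -/
def pw (e : Fin n → Fin n → ℝ) : List (Fin n) → ℝ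
  | [] => 0
  | [_] => 0
  | x :: y :: l => e x y + pw e (y :: l)

lemma pw_cons_append (e : Fin n → Fin n → ℝ) (y z : Fin n) (l : List (Fin n)) :
    pw e (y :: (l ++ [z])) = e y (l.headD z) + pw e (l ++ [z]) := by
  cases l <;> simp [pw]

lemma pw_append (e : Fin n → Fin n → ℝ) (x : Fin n) (l₂ : List (Fin n)) :
    ∀ l₁ : List (Fin n), pw e (l₁ ++ x :: l₂) = pw e (l₁ ++ [x]) + pw e (x :: l₂)
  | [] => by simp [pw]
  | [y] => by simp [pw]
  | y :: z :: l => by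
    have := pw_append e x l₂ (z :: l)
    simp only [List.cons_append, pw] at this ⊢
    linarith

lemma cycle_perm (e : Fin n → Fin n → ℝ) (he : ∀ i, e i i = 0) (z : Fin n) :
    ∀ l : List (Fin n), (l ++ [z]).Nodup → ∃ σ : Equiv.Perm (Fin n), σ z = l.headD z ∧
      (∀ k, k ∉ l ++ [z] → σ k = k) ∧
      ∑ i, e i (σ i) = pw e (l ++ [z]) + e z (l.headD z)
  | [], _ => ⟨1, by simp, by simp, by simp [pw, he]⟩
  | y :: l, h => by
    have h' : y ∉ l ++ [z] ∧ (l ++ [z]).Nodup := by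
      rw [List.cons_append, List.nodup_cons] at h; exact h
    obtain ⟨σ, h1, h2, h3⟩ := cycle_perm e he z l h'.2
    have hyz : y ≠ z := by
      rintro rfl; exact h'.1 (by simp)
    set x := l.headD z with hx
    have hσy : σ y = y := h2 y h'.1
    have hxm : x ∈ l ++ [z] := by
      rw [hx]; cases l <;> simp
    have hyx : y ≠ x := fun h => h'.1 (h ▸ hxm)
    refine ⟨Equiv.swap x y * σ, by simp [h1], ?_, ?_⟩
    · intro k hk
      have hk1 : k ≠ y := by rintro rfl; exact hk (by simp)
      have hk2 : k ∉ l ++ [z] := fun hm => hk (by rw [List.cons_append]; exact List.mem_cons_of_mem _ hm)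
      have hk3 : k ≠ x := by rintro rfl; exact hk2 hxm
      simp [h2 k hk2, Equiv.swap_apply_of_ne_of_ne hk3 hk1]
    · have hpt : ∀ i, e i ((Equiv.swap x y * σ) i) = e i (σ i) +
          (if i = z then e z y - e z x else 0) + (if i = y then e y x else 0) := by
        intro i
        by_cases hiz : i = z
        · subst hiz
          simp [h1, hyz.symm]
        · by_cases hiy : i = y
          · subst hiy
            simp [hσy, hiz, he]
          · have ha : σ i ≠ x := fun h => hiz (σ.injective (h.trans h1.symm))
            have hb : σ i ≠ y := fun h => hiy (σ.injective (h.trans hσy.symm))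
            simp [hiz, hiy, Equiv.swap_apply_of_ne_of_ne ha hb]
      simp only [hpt, Finset.sum_add_distrib, Finset.sum_ite_eq', Finset.mem_univ, if_true, h3]
      rw [List.cons_append, pw_cons_append]
      simp only [List.headD_cons]
      rw [← hx]
      ring

lemma payments (w : Fin n → Fin n → ℝ)
    (hw : ∀ σ : Equiv.Perm (Fin n), ∑ i, w i (σ i) ≤ ∑ i, w i i) :
    ∃ p : Fin n → ℝ, (∀ i, 0 ≤ p i) ∧ ∀ i j, w i j + p j ≤ w i i + p i := by
  set e : Fin n → Fin n → ℝ := fun i j => w i j - w i i with hedef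
  have he : ∀ i, e i i = 0 := fun i => by simp [hedef]
  have hfin : Set.Finite {l : List (Fin n) | l.Nodup} :=
    (List.finite_length_le (Fin n) (Fintype.card (Fin n))).subset
      fun l hl => List.Nodup.length_le_card hl
  have hmax : ∀ i, ∃ l : List (Fin n), (i :: l).Nodup ∧
      ∀ l', (i :: l').Nodup → pw e (i :: l') ≤ pw e (i :: l) := by
    intro i
    exact Set.exists_max_image {l : List (Fin n) | (i :: l).Nodup} (fun l => pw e (i :: l))
      (hfin.subset fun l hl => (List.nodup_cons.1 hl).2) ⟨[], by simp⟩
  choose L hL hLmax using hmax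
  refine ⟨fun i => pw e (i :: L i), fun i => ?_, fun i j => ?_⟩
  · have := hLmax i [] (by simp)
    simpa [pw] using this
  · suffices h : e i j + pw e (j :: L j) ≤ pw e (i :: L i) by
      simp only [hedef] at h ⊢
      linarith
    by_cases hij : i = j
    · subst hij; rw [he]; simp
    by_cases hm : i ∈ L j
    · obtain ⟨l₁, l₂, hl⟩ := List.append_of_mem hm
      have hnd := hL j
      rw [hl] at hnd
      have e1 : j :: (l₁ ++ i :: l₂) = (j :: l₁) ++ i :: l₂ := rfl
      have e2 : j :: (l₁ ++ i :: l₂) = ((j :: l₁) ++ [i]) ++ l₂ := by simp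
      have hnd1 : ((j :: l₁) ++ [i]).Nodup := by
        rw [e2] at hnd; exact (List.nodup_append.1 hnd).1
      have hnd2 : (i :: l₂).Nodup := by
        rw [e1] at hnd; exact (List.nodup_append.1 hnd).2.1
      obtain ⟨σ, -, -, hσ⟩ := cycle_perm e he i (j :: l₁) hnd1
      have hle : ∑ k, e k (σ k) ≤ 0 := by
        simp only [hedef, Finset.sum_sub_distrib]
        linarith [hw σ]
      rw [hl, e1, pw_append]
      have := hLmax i l₂ hnd2
      simp only [List.headD_cons] at hσ
      linarith
    · have := hLmax i (j :: L j) (List.nodup_cons.2 ⟨by simp [hij, hm], hL j⟩)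
      simpa [pw] using this

end EFProof


/-- With indivisible goods and chores (additive utilities), an allocation that is
simultaneously EF1 and envy-freeable always exists. -/
theorem ef1_and_envy_freeable_exists
    (n : ℕ) (hn : 0 < n) (I : Type) [Fintype I] [DecidableEq I]
    (u : Fin n → I → ℝ) :
    ∃ A : Fin n → Finset I,
      -- (A_1, …, A_n) is a partition of the items
      (∀ i j, i ≠ j → Disjoint (A i) (A j)) ∧
      (Finset.univ.biUnion A = Finset.univ) ∧
      -- EF1
      (∀ i j : Fin n,
        (∑ t ∈ A i, u i t) ≥ (∑ t ∈ A j, u i t) ∨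
          ∃ t ∈ A i ∪ A j,
            (∑ s ∈ (A i).erase t, u i s) ≥ ∑ s ∈ (A j).erase t, u i s) ∧
      -- envy-freeable
      (∃ p : Fin n → ℝ, (∀ i, 0 ≤ p i) ∧
        ∀ i j : Fin n, (∑ t ∈ A i, u i t) + p i ≥ (∑ t ∈ A j, u i t) + p j) := by
  obtain ⟨a, hpm, hef⟩ := EFProof.main_aux hn _ (Finset.univ : Finset I) rfl u
  have hv : ∀ i j, EFProof.val u Finset.univ a i j =
      ∑ t ∈ Finset.univ.filter (fun t => a t = j), u i t := fun i j =>
    EFProof.val_le_sum u _ a i j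
  obtain ⟨p, hp0, hp⟩ := EFProof.payments (EFProof.val u Finset.univ a) (by
    have key : ∀ τ : Equiv.Perm (Fin n), ∑ i, EFProof.val u Finset.univ a i (τ i) =
        ∑ t, u (τ.symm (a t)) t := by
      intro τ
      unfold EFProof.val
      rw [Finset.sum_comm]
      refine Finset.sum_congr rfl fun t _ => ?_
      rw [Finset.sum_eq_single (τ.symm (a t))]
      · simp
      · intro b _ hb
        rw [if_neg]
        intro h
        exact hb (by simp [h])
      · simp
    intro σ
    have h1 := key σ
    have h2 := key 1
    have h3 := hpm σ.symm
    simp only [Equiv.Perm.coe_one, id_eq] at h2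
    rw [h1, h2]
    exact h3)
  refine ⟨fun j => Finset.univ.filter (fun t => a t = j), ?_, ?_, ?_, p, hp0, ?_⟩
  · intro i j hij
    rw [Finset.disjoint_left]
    intro t hi hj
    exact hij ((Finset.mem_filter.1 hi).2.symm.trans (Finset.mem_filter.1 hj).2)
  · ext t; simp
  · intro i j
    by_cases hij : i = j
    · subst hij; left; exact le_rfl
    have h := hef i j
    rw [hv, hv] at h
    rcases h with h | ⟨x, -, hxj, -, hle⟩ | ⟨x, -, hxi, -, hle⟩
    · exact Or.inl h
    · right
      have hm : x ∈ Finset.univ.filter (fun t => a t = j) := by simp [hxj]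
      refine ⟨x, Finset.mem_union_right _ hm, ?_⟩
      rw [Finset.erase_eq_of_notMem (s := Finset.univ.filter (fun t => a t = i))
        (by simp [hxj, Ne.symm hij]), Finset.sum_erase_eq_sub hm]
      exact hle
    · right
      have hm : x ∈ Finset.univ.filter (fun t => a t = i) := by simp [hxi]
      refine ⟨x, Finset.mem_union_left _ hm, ?_⟩
      rw [Finset.erase_eq_of_notMem (s := Finset.univ.filter (fun t => a t = j))
        (by simp [hxi, hij]), Finset.sum_erase_eq_sub hm]
      exact hle
  · intro i j
    have := hp i j
    rw [hv, hv] at this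
    exact this
end

section
/- Let n ≥ 2 and let each agent i ∈ {1,…,n} have a utility over the cake C = [0,1] given by a nonnegative integrable density f_i with ∫_0^1 f_i(x) dx = 1. Then, for every α ∈ [0,1], there exists a set I_α ⊆ [0,1] that is a union of at most n intervals and satisfies ∫_{I_α} f_i(x) dx = α for every agent i. -/
namespace SW
open Finset

/-- `1` if the parities of the word alternate, starting with `e`; else `0`. -/
def altw : Bool → List ℕ → ZMod 2
  | _, [] => 1
  | e, c :: l => if c.bodd = e then altw (!e) l else 0

noncomputable def F (e : Bool) (M : Multiset ℕ) : ZMod 2 := altw e (M.sort (· ≤ ·))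

lemma F_cons (e : Bool) (c : ℕ) (M : Multiset ℕ) (h : ∀ b ∈ M, c ≤ b) :
    F e (c ::ₘ M) = if c.bodd = e then F (!e) M else 0 := by
  unfold F
  rw [Multiset.sort_cons _ _ _ h]
  rfl

lemma F_zero (e : Bool) : F e 0 = 1 := by simp [F, altw]

lemma sorted_induction {P : Multiset ℕ → Prop} (h0 : P 0)
    (h1 : ∀ c M, (∀ b ∈ M, c ≤ b) → P M → P (c ::ₘ M)) (M : Multiset ℕ) : P M := by
  have key : ∀ l : List ℕ, l.Pairwise (· ≤ ·) → P (l : Multiset ℕ) := by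
    intro l
    induction l with
    | nil => intro _; exact h0
    | cons c l ih =>
      intro h
      rw [List.pairwise_cons] at h
      rw [← Multiset.cons_coe]
      exact h1 c l (by simpa using h.1) (ih h.2)
  have := key (M.sort (· ≤ ·)) (Multiset.pairwise_sort _ _)
  simpa using this

lemma zmod2_self (a : ZMod 2) : a + a = 0 := CharTwo.add_self_eq_zero a

lemma F_erase (M : Multiset ℕ) : ∀ e,
    (M.map (fun a => F e (M.erase a))).sum = F e M + F (!e) M := by
  induction M using sorted_induction with
  | h0 => intro e; simp [F_zero, zmod2_self]
  | h1 c M h ih =>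
    intro e
    rw [Multiset.map_cons, Multiset.sum_cons, Multiset.erase_cons_head]
    have : M.map (fun a => F e ((c ::ₘ M).erase a))
        = M.map (fun a => if c.bodd = e then F (!e) (M.erase a) else 0) := by
      apply Multiset.map_congr rfl
      intro a ha
      rw [Multiset.erase_cons_tail_of_mem ha, F_cons]
      intro b hb
      exact h b (Multiset.mem_of_mem_erase hb)
    rw [this, F_cons e c M h, F_cons (!e) c M h]
    by_cases hc : c.bodd = e
    · have h2 : ¬ (c.bodd = !e) := by rw [hc]; cases e <;> simp
      simp only [hc, if_true]
      rw [ih (!e)]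
      simp only [Bool.not_not]
      have h3 : ¬ (e = !e) := by cases e <;> simp
      simp only [h3, if_false]
      linear_combination zmod2_self (F e M)
    · have h2 : (c.bodd = !e) := by revert hc; cases e <;> cases c.bodd <;> simp
      simp [h2]

def comp (c : ℕ) : ℕ := if c.bodd then c - 1 else c + 1

lemma comp_div (c : ℕ) : comp c / 2 = c / 2 := by
  unfold comp
  have := Nat.bodd_add_div2 c
  rw [Nat.div2_val] at this
  cases h : c.bodd <;> simp [h] at this ⊢ <;> omega

lemma comp_bodd (c : ℕ) : (comp c).bodd = !c.bodd := by
  unfold comp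
  cases h : c.bodd
  · simp [h]
  · obtain ⟨d, rfl⟩ : ∃ d, c = d + 1 := ⟨c - 1, by cases c <;> simp_all⟩
    simp at h ⊢
    exact h

lemma F_comp (M : Multiset ℕ) : (∀ a ∈ M, ∀ b ∈ M, a / 2 = b / 2 → a = b) → ∀ e,
    F e (M.map comp) = F (!e) M := by
  induction M using sorted_induction with
  | h0 => intro _ e; simp [F_zero]
  | h1 c M h ih =>
    intro hM e
    have ih' := ih (fun a ha b hb => hM a (Multiset.mem_cons_of_mem ha) b (Multiset.mem_cons_of_mem hb))
    rw [Multiset.map_cons, F_cons, F_cons _ _ _ h, ih', comp_bodd]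
    · cases e <;> cases c.bodd <;> simp
    · intro b hb
      obtain ⟨b, hb', rfl⟩ := Multiset.mem_map.1 hb
      have h1 := h b hb'
      by_cases hq : c / 2 = b / 2
      · rw [hM c (by simp) b (by simp [hb']) hq]
      · have := comp_div c
        have := comp_div b
        omega

lemma F_card (M : Multiset ℕ) (e : Bool) (m : ℕ) (hM : ∀ a ∈ M, ∀ b ∈ M, a / 2 = b / 2 → a = b)
    (hm : ∀ a ∈ M, a / 2 < m) (hF : F e M ≠ 0) : Multiset.card M ≤ m := by
  have hch : ∀ (l : List ℕ) (e : Bool), l.Pairwise (· ≤ ·) → altw e l ≠ 0 → l.IsChain (· < ·) := by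
    intro l
    induction l with
    | nil => intros; simp
    | cons c l ih =>
      intro e hp ha
      simp only [altw] at ha
      by_cases hc : c.bodd = e
      · simp only [hc, if_true] at ha
        rw [List.pairwise_cons] at hp
        have h1 := ih _ hp.2 ha
        cases l with
        | nil => simp
        | cons d l =>
          rw [List.isChain_cons_cons]
          refine ⟨lt_of_le_of_ne (hp.1 d (by simp)) ?_, h1⟩
          rintro rfl
          simp only [altw] at ha
          subst hc
          revert ha
          cases c.bodd <;> simp
      · simp [hc] at ha
  have h1 := hch _ e (Multiset.pairwise_sort M (· ≤ ·)) hF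
  rw [List.isChain_iff_pairwise] at h1
  have hnd : M.Nodup := by
    have : ((M.sort (· ≤ ·) : List ℕ) : Multiset ℕ).Nodup := by
      rw [Multiset.coe_nodup]; exact h1.imp (fun h => ne_of_lt h)
    simpa using this
  have hnd2 : (M.map (· / 2)).Nodup := Multiset.Nodup.map_on hM hnd
  have hsub : M.map (· / 2) ⊆ Multiset.range m := by
    intro x hx
    obtain ⟨a, ha, rfl⟩ := Multiset.mem_map.1 hx
    simpa using hm a ha
  have := Multiset.card_le_card ((Multiset.le_iff_subset hnd2).2 hsub)
  simpa using this

section Tucker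
variable {N : ℕ}

def vtx (p : Equiv.Perm (Fin N) × (Fin N → Bool)) (j : ℕ) : Fin N → SignType :=
  fun c => if (p.1 c).val ≤ j then (if p.2 c then 1 else -1) else 0

def H (N k : ℕ) : Finset (Equiv.Perm (Fin N) × (Fin N → Bool)) :=
  univ.filter (fun p => (∀ c : Fin N, k < c.val → p.1 c = c) ∧ ∀ c : Fin N, k ≤ c.val → p.2 c = true)

def Mk (code : (Fin N → SignType) → ℕ) (p : Equiv.Perm (Fin N) × (Fin N → Bool)) (t : Finset ℕ) :
    Multiset ℕ := t.val.map (fun j => code (vtx p j))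

lemma Mk_congr (code : (Fin N → SignType) → ℕ) {p q : Equiv.Perm (Fin N) × (Fin N → Bool)}
    {t : Finset ℕ} (h : ∀ j ∈ t, vtx p j = vtx q j) : Mk code p t = Mk code q t := by
  unfold Mk
  exact Multiset.map_congr rfl (fun j hj => by rw [h j hj])

noncomputable def T (code : (Fin N → SignType) → ℕ) (e : Bool) (k : ℕ) : ZMod 2 :=
  ∑ p ∈ H N k, F e (Mk code p (range (k + 1)))

lemma perm_le {ρ : Equiv.Perm (Fin N)} {k : ℕ} (h : ∀ c : Fin N, k < c.val → ρ c = c) (c : Fin N)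
    (hc : (ρ c).val ≤ k) : c.val ≤ k := by
  by_contra hlt
  push Not at hlt
  rw [h c hlt] at hc
  omega

lemma perm_symm_le {ρ : Equiv.Perm (Fin N)} {k : ℕ} (h : ∀ c : Fin N, k < c.val → ρ c = c) (c : Fin N)
    (hc : c.val ≤ k) : (ρ c).val ≤ k := by
  by_contra hlt
  push Not at hlt
  have := ρ.injective (h _ hlt)
  rw [this] at hlt
  omega

lemma vtx_ne_zero (p : Equiv.Perm (Fin N) × (Fin N → Bool)) (hN : 0 < N) (j : ℕ) : vtx p j ≠ 0 := by
  intro h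
  have := congrFun h (p.1.symm ⟨0, hN⟩)
  simp only [vtx, Equiv.apply_symm_apply, Nat.zero_le, if_true, Pi.zero_apply] at this
  split_ifs at this

lemma vtx_mono (p : Equiv.Perm (Fin N) × (Fin N → Bool)) {i j : ℕ} (h : i ≤ j) (c : Fin N)
    (hc : vtx p i c ≠ 0) : vtx p j c = vtx p i c := by
  unfold vtx at *
  by_cases h1 : (p.1 c).val ≤ i
  · simp [h1, h1.trans h]
  · simp [h1] at hc

/-- interior facets cancel -/
lemma facet_swap (code : (Fin N → SignType) → ℕ) (k j : ℕ) (hk : k < N) (hj : j < k) :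
    ∑ p ∈ H N k, F true (Mk code p ((range (k + 1)).erase j)) = 0 := by
  have hj0 : j < N := by omega
  have hj1 : j + 1 < N := by omega
  refine Finset.sum_involution
    (fun p _ => (p.1.trans (Equiv.swap ⟨j, hj0⟩ ⟨j + 1, hj1⟩), p.2)) ?_ ?_ ?_ ?_
  · intro p hp
    rw [Mk_congr code (p := p)
      (q := (p.1.trans (Equiv.swap ⟨j, hj0⟩ ⟨j + 1, hj1⟩), p.2)), zmod2_self]
    intro l hl
    have hl' : l ≠ j := (Finset.mem_erase.1 hl).1
    funext c
    simp only [vtx, Equiv.trans_apply]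
    have : ((Equiv.swap (⟨j, hj0⟩ : Fin N) ⟨j + 1, hj1⟩ (p.1 c)).val ≤ l) ↔ (p.1 c).val ≤ l := by
      rw [Equiv.swap_apply_def]
      split_ifs with h1 h2
      · rw [h1]; simp only; omega
      · rw [h2]; simp only; omega
      · rfl
    simp only [this]
  · intro p hp _ heq
    have h1 := congrArg Prod.fst heq
    have h2 := congrArg (fun σ => σ (p.1.symm ⟨j, hj0⟩)) h1
    simp [Fin.ext_iff] at h2
  · intro p hp
    simp only [H, mem_filter, mem_univ, true_and] at hp ⊢
    refine ⟨fun c hc => ?_, hp.2⟩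
    simp only [Equiv.trans_apply]
    rw [hp.1 c hc]
    apply Equiv.swap_apply_of_ne_of_ne <;> (intro h; rw [Fin.ext_iff] at h; simp only at h; omega)
  · intro p hp
    ext c
    · simp
    · simp

lemma facet_flip (code : (Fin N → SignType) → ℕ) (k : ℕ) (hk : k + 1 < N) :
    ∑ p ∈ (H N (k + 1)).filter (fun p => ¬ p.1 ⟨k + 1, hk⟩ = ⟨k + 1, hk⟩),
      F true (Mk code p (range (k + 1))) = 0 := by
  refine Finset.sum_involution
    (fun p _ => (p.1, Function.update p.2 (p.1.symm ⟨k + 1, hk⟩) (! p.2 (p.1.symm ⟨k + 1, hk⟩)))) ?_ ?_ ?_ ?_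
  · intro p hp
    rw [Mk_congr code (p := p) (q := (p.1, Function.update p.2 (p.1.symm ⟨k + 1, hk⟩)
      (! p.2 (p.1.symm ⟨k + 1, hk⟩)))), zmod2_self]
    intro l hl
    have hl' := Finset.mem_range.1 hl
    funext c
    simp only [vtx]
    by_cases hc : c = p.1.symm ⟨k + 1, hk⟩
    · subst hc
      have : ¬ (k + 1 ≤ l) := by omega
      simp [this]
    · simp only [Function.update_of_ne hc]
  · intro p hp _ heq
    have h1 := congrArg Prod.snd heq
    have h2 := congrFun h1 (p.1.symm ⟨k + 1, hk⟩)
    simp at h2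
  · intro p hp
    simp only [H, mem_filter, mem_univ, true_and] at hp ⊢
    refine ⟨⟨hp.1.1, fun c hc => ?_⟩, hp.2⟩
    rw [Function.update_of_ne, hp.1.2 c hc]
    rintro rfl
    rcases hc.lt_or_eq with hc | hc
    · have := hp.1.1 _ hc
      rw [Equiv.apply_symm_apply] at this
      rw [← this] at hc
      simp at hc
    · apply hp.2
      have : (⟨k + 1, hk⟩ : Fin N) = p.1.symm ⟨k + 1, hk⟩ := Fin.ext hc
      conv_lhs => rw [this]
      simp
  · intro p hp
    simp

lemma T_step (code : (Fin N → SignType) → ℕ)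
    (hneg : ∀ x, x ≠ 0 → code (-x) = comp (code x))
    (hcomp : ∀ x y, x ≠ 0 → (∀ c, x c ≠ 0 → y c = x c) → code x / 2 = code y / 2 → code x = code y)
    (k : ℕ) (hk : k + 1 < N) :
    T code true (k + 1) + T code false (k + 1) = T code true k + T code false k := by
  have hmk : ∀ p : Equiv.Perm (Fin N) × (Fin N → Bool), ∀ t : Finset ℕ,
      F true (Mk code p t) + F false (Mk code p t) = ∑ j ∈ t, F true (Mk code p (t.erase j)) := by
    intro p t
    have := F_erase (Mk code p t) true
    rw [Bool.not_true] at this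
    rw [← this]
    unfold Mk
    rw [Multiset.map_map, Finset.sum]
    congr 1
    apply Multiset.map_congr rfl
    intro j hj
    simp only [Function.comp, Finset.erase_val]
    rw [Multiset.map_erase_of_mem _ _ hj]
  unfold T
  rw [← Finset.sum_add_distrib]
  simp_rw [hmk]
  rw [Finset.sum_comm, Finset.sum_range_succ, Finset.sum_eq_zero, zero_add]
  swap
  · intro j hj
    exact facet_swap code (k + 1) j hk (Finset.mem_range.1 hj)
  have he : (range (k + 1 + 1)).erase (k + 1) = range (k + 1) := by
    ext x; simp; omega
  rw [he, ← Finset.sum_filter_add_sum_filter_not (H N (k + 1)) (fun p => p.1 ⟨k + 1, hk⟩ = ⟨k + 1, hk⟩),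
    facet_flip code k hk, add_zero]
  rw [← Finset.sum_filter_add_sum_filter_not _ (fun p => p.2 ⟨k, by omega⟩ = true)]
  congr 1
  · apply Finset.sum_congr _ (fun _ _ => rfl)
    ext p
    simp only [H, mem_filter, mem_univ, true_and]
    constructor
    · rintro ⟨⟨⟨h1, h2⟩, h3⟩, h4⟩
      refine ⟨fun c hc => ?_, fun c hc => ?_⟩
      · rcases (Nat.succ_le_of_lt hc).lt_or_eq with h | h
        · exact h1 c h
        · have : c = ⟨k + 1, hk⟩ := Fin.ext h.symm
          rw [this, h3]
      · rcases hc.lt_or_eq with h | h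
        · exact h2 c h
        · have : c = ⟨k, by omega⟩ := Fin.ext h.symm
          rw [this, h4]
    · rintro ⟨h1, h2⟩
      exact ⟨⟨⟨fun c hc => h1 c (by omega), fun c hc => h2 c (by omega)⟩, h1 _ (by simp)⟩, h2 _ (by simp)⟩
  · refine Finset.sum_nbij' (fun p => (p.1, fun c => if c.val ≤ k then ! p.2 c else p.2 c))
      (fun p => (p.1, fun c => if c.val ≤ k then ! p.2 c else p.2 c)) ?_ ?_ ?_ ?_ ?_
    · intro p
      simp only [H, mem_filter, mem_univ, true_and]
      rintro ⟨⟨⟨h1, h2⟩, h3⟩, h4⟩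
      refine ⟨fun c hc => ?_, fun c hc => ?_⟩
      · rcases (Nat.succ_le_of_lt hc).lt_or_eq with h | h
        · exact h1 c h
        · have : c = ⟨k + 1, hk⟩ := Fin.ext h.symm
          rw [this, h3]
      · rcases hc.lt_or_eq with h | h
        · rw [if_neg (by omega)]; exact h2 c h
        · have : c = ⟨k, by omega⟩ := Fin.ext h.symm
          rw [this, if_pos le_rfl]; simpa using h4
    · intro p
      simp only [H, mem_filter, mem_univ, true_and]
      rintro ⟨h1, h2⟩
      refine ⟨⟨⟨fun c hc => h1 c (by omega), fun c hc => ?_⟩, h1 _ (by simp)⟩, ?_⟩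
      · rw [if_neg (by omega)]; exact h2 c (by omega)
      · rw [if_pos le_rfl, h2 _ le_rfl]; simp
    · intro p hp
      ext c
      · rfl
      · simp only; split_ifs <;> simp
    · intro p hp
      ext c
      · rfl
      · simp only; split_ifs <;> simp
    · intro p hp
      set q : Equiv.Perm (Fin N) × (Fin N → Bool) :=
        (p.1, fun c => if c.val ≤ k then ! p.2 c else p.2 c) with hq
      simp only [H, mem_filter, mem_univ, true_and] at hp
      obtain ⟨⟨⟨h1, h2⟩, h3⟩, h4⟩ := hp
      have h5 : ∀ c : Fin N, k < c.val → p.1 c = c := by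
        intro c hc
        rcases (Nat.succ_le_of_lt hc).lt_or_eq with h | h
        · exact h1 c h
        · have : c = ⟨k + 1, hk⟩ := Fin.ext h.symm
          rw [this, h3]
      have hv : ∀ j ∈ range (k + 1), vtx p j = - vtx q j := by
        intro j hj
        have hj := Finset.mem_range.1 hj
        funext c
        simp only [vtx, hq, Pi.neg_apply]
        by_cases hc : (p.1 c).val ≤ j
        · have := perm_le h5 c (by omega)
          simp only [hc, this, if_true]
          cases p.2 c <;> simp
        · simp [hc]
      have hM : Mk code p (range (k + 1)) = (Mk code q (range (k + 1))).map comp := by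
        unfold Mk
        rw [Multiset.map_map]
        apply Multiset.map_congr rfl
        intro j hj
        rw [hv j hj, hneg _ (vtx_ne_zero q (by omega) j)]
        rfl
      rw [hM, F_comp]
      · rfl
      · intro a ha b hb hab
        obtain ⟨i, _, rfl⟩ := Multiset.mem_map.1 ha
        obtain ⟨j, _, rfl⟩ := Multiset.mem_map.1 hb
        rcases le_total i j with h | h
        · exact hcomp _ _ (vtx_ne_zero q (by omega) i) (vtx_mono q h) hab
        · exact (hcomp _ _ (vtx_ne_zero q (by omega) j) (vtx_mono q h) hab.symm).symm

lemma T_zero (code : (Fin N → SignType) → ℕ) (_hN : 0 < N) :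
    T code true 0 + T code false 0 = 1 := by
  have hH : H N 0 = {(1, fun _ => true)} := by
    ext p
    simp only [H, mem_filter, mem_univ, true_and, mem_singleton]
    constructor
    · rintro ⟨h1, h2⟩
      have h3 : ∀ c : Fin N, c.val ≤ 0 → p.1 c = c := by
        intro c hc
        have := perm_symm_le h1 c hc
        ext; omega
      ext c
      · rcases Nat.eq_zero_or_pos c.val with h | h
        · rw [h3 c h.le]; rfl
        · rw [h1 c h]; rfl
      · simp [h2 c (Nat.zero_le _)]
    · rintro rfl
      simp
  unfold T
  rw [hH, Finset.sum_singleton, Finset.sum_singleton]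
  have : Mk code ((1 : Equiv.Perm (Fin N)), fun _ => true) (range (0 + 1))
    = (code (vtx (1, fun _ => true) 0)) ::ₘ 0 := by
    unfold Mk; simp
  rw [this, F_cons _ _ _ (by simp), F_cons _ _ _ (by simp), F_zero, F_zero]
  cases (code (vtx ((1 : Equiv.Perm (Fin N)), fun _ => true) 0)).bodd <;> simp

/-- Octahedral Tucker lemma. -/
theorem tucker (code : (Fin N → SignType) → ℕ) (m : ℕ)
    (hneg : ∀ x, x ≠ 0 → code (-x) = comp (code x))
    (hcomp : ∀ x y, x ≠ 0 → (∀ c, x c ≠ 0 → y c = x c) → code x / 2 = code y / 2 → code x = code y)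
    (hm : ∀ x, x ≠ 0 → code x / 2 < m) : N ≤ m := by
  rcases Nat.eq_zero_or_pos N with h | hN
  · omega
  have key : ∀ k, k < N → T code true k + T code false k = 1 := by
    intro k
    induction k with
    | zero => intro h; exact T_zero code h
    | succ k ih => intro h; rw [T_step code hneg hcomp k h]; exact ih (by omega)
  have h1 := key (N - 1) (by omega)
  have h2 : ∃ e, T code e (N - 1) ≠ 0 := by
    by_contra hcon
    push Not at hcon
    rw [hcon, hcon] at h1
    simp at h1
  obtain ⟨e, he⟩ := h2
  obtain ⟨p, -, hp⟩ := Finset.exists_ne_zero_of_sum_ne_zero he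
  have := F_card _ e m ?_ ?_ hp
  · simp [Mk] at this; omega
  · intro a ha b hb hab
    obtain ⟨i, _, rfl⟩ := Multiset.mem_map.1 ha
    obtain ⟨j, _, rfl⟩ := Multiset.mem_map.1 hb
    rcases le_total i j with h | h
    · exact hcomp _ _ (vtx_ne_zero p (by omega) i) (vtx_mono p h) hab
    · exact (hcomp _ _ (vtx_ne_zero p (by omega) j) (vtx_mono p h) hab.symm).symm
  · intro a ha
    obtain ⟨i, _, rfl⟩ := Multiset.mem_map.1 ha
    exact hm _ (vtx_ne_zero p hN i)

end Tucker
/-- sign of a boolean -/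
def sg (b : Bool) : SignType := if b then 1 else -1

/-- state of the automaton: keep the state on a match, flip it on a mismatch -/
def st (e : Bool) (y : ℕ → SignType) : ℕ → Bool
  | 0 => e
  | j + 1 => if y j = sg (st e y j) then st e y j else ! st e y j

/-- number of matches -/
def mt (e : Bool) (y : ℕ → SignType) : ℕ → ℕ
  | 0 => 0
  | j + 1 => if y j = sg (st e y j) then mt e y j + 1 else mt e y j

lemma st_neg (e : Bool) (y : ℕ → SignType) (j : ℕ) : st (!e) (-y) j = ! st e y j := by
  induction j with
  | zero => rfl
  | succ j ih =>
    simp only [st, ih, Pi.neg_apply]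
    cases st e y j <;> rcases y j with _ | _ | _ <;> simp [sg]

lemma mt_neg (e : Bool) (y : ℕ → SignType) (j : ℕ) : mt (!e) (-y) j = mt e y j := by
  induction j with
  | zero => rfl
  | succ j ih =>
    simp only [mt, st_neg, ih, Pi.neg_apply]
    cases st e y j <;> rcases y j with _ | _ | _ <;> simp [sg]

lemma mt_mono (e : Bool) (x y : ℕ → SignType) (h : ∀ c, x c ≠ 0 → y c = x c) (j : ℕ) :
    mt e x j + (if st e x j = st e y j then 0 else 1) ≤ mt e y j := by
  induction j with
  | zero => simp [mt, st]
  | succ j ih =>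
    simp only [mt, st]
    have h1 := h j
    have hs : ∀ s : SignType, s = -1 ∨ s = 0 ∨ s = 1 := by decide
    rcases Bool.eq_false_or_eq_true (st e x j) with hx | hx <;>
    rcases Bool.eq_false_or_eq_true (st e y j) with hy | hy <;>
    rcases hs (x j) with hxj | hxj | hxj <;>
    rcases hs (y j) with hyj | hyj | hyj <;>
    simp [hx, hy, hxj, hyj, sg] at ih h1 ⊢ <;> omega

lemma mt_two (y : ℕ → SignType) (j : ℕ) :
    (st true y j = (! st false y j) ∧ mt true y j = mt false y j ∧ ∀ i < j, y i = 0) ∨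
    (st true y j = st false y j ∧ mt true y j ≠ mt false y j) := by
  induction j with
  | zero => simp [mt, st]
  | succ j ih =>
    simp only [mt, st]
    rcases ih with ⟨h1, h2, h3⟩ | ⟨h1, h2⟩
    · rw [h1, h2]
      by_cases h0 : y j = 0
      · left
        refine ⟨?_, ?_, ?_⟩
        · rw [h0]; cases st false y j <;> simp [sg]
        · rw [h0]; cases st false y j <;> simp [sg]
        · intro i hi
          rcases (Nat.lt_succ_iff.1 hi).lt_or_eq with h | h
          · exact h3 i h
          · rw [h, h0]
      · right
        revert h0
        cases st false y j <;> rcases y j with _ | _ | _ <;> simp [sg]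
    · right
      rw [h1]
      split_ifs <;> simp [h2]

lemma mt_le (e : Bool) (y : ℕ → SignType) (j : ℕ) : mt e y j ≤ j := by
  induction j with
  | zero => simp [mt]
  | succ j ih => simp only [mt]; split_ifs <;> omega

lemma mt_card (e : Bool) (y : ℕ → SignType) (j : ℕ) :
    #{i ∈ range j | ¬ y i = sg (st e y i)} + mt e y j = j := by
  induction j with
  | zero => simp [mt]
  | succ j ih =>
    rw [Finset.range_add_one, Finset.filter_insert]
    simp only [mt]
    split_ifs with h <;> first | (rw [Finset.card_insert_of_notMem (by simp)]; omega) | omega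

def ext {N : ℕ} (y : Fin N → SignType) : ℕ → SignType := fun j => if h : j < N then y ⟨j, h⟩ else 0

lemma ext_neg {N : ℕ} (y : Fin N → SignType) : ext (-y) = - ext y := by
  funext j; simp only [ext, Pi.neg_apply]; split_ifs <;> simp

lemma ext_mono {N : ℕ} {x y : Fin N → SignType} (h : ∀ c, x c ≠ 0 → y c = x c) (c : ℕ)
    (hc : ext x c ≠ 0) : ext y c = ext x c := by
  unfold ext at *
  split_ifs at * with h1
  · exact h _ hc
  · rfl

/-- discrete halving -/
theorem halving (n N : ℕ) (hnN : n < N) (w : Fin n → ℕ → ℝ) (hw0 : ∀ i j, 0 ≤ w i j) (δ : ℝ)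
    (hδ : ∀ i j, w i j ≤ δ) :
    ∃ b : ℕ → Bool, #{j ∈ range N | b (j + 1) ≠ b j} ≤ n ∧
      ∀ i, |∑ j ∈ range N, (if b j then w i j else 0) - (∑ j ∈ range N, w i j) / 2| ≤ n * δ := by
  classical
  -- weight of the part of sign `s`
  let V : Fin n → SignType → (Fin N → SignType) → ℝ := fun i s y =>
    ∑ j ∈ range N, if ext y j = s then w i j else 0
  let W : Fin n → ℝ := fun i => (∑ j ∈ range N, w i j) / 2
  have Vneg : ∀ i s y, V i s (-y) = V i (-s) y := by
    intro i s y
    simp only [V, ext_neg, Pi.neg_apply]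
    apply Finset.sum_congr rfl
    intro j _
    have : (- ext y j = s) ↔ (ext y j = -s) := by
      rcases ext y j with _ | _ | _ <;> rcases s with _ | _ | _ <;> decide
    simp only [this]
  have Vmono : ∀ i s x y, s ≠ 0 → (∀ c, x c ≠ 0 → y c = x c) → V i s x ≤ V i s y := by
    intro i s x y hs h
    apply Finset.sum_le_sum
    intro j _
    by_cases h1 : ext x j = s
    · rw [if_pos h1, if_pos]
      rw [ext_mono h j (by rw [h1]; exact hs), h1]
    · rw [if_neg h1]
      split_ifs
      · exact hw0 i j
      · exact le_rfl
  have Vsum : ∀ i y, V i 1 y + V i (-1) y ≤ 2 * W i := by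
    intro i y
    simp only [V, W]
    rw [← Finset.sum_add_distrib, mul_div_cancel₀ _ (by norm_num)]
    apply Finset.sum_le_sum
    intro j _
    have := hw0 i j
    rcases ext y j with _ | _ | _ <;> simp <;> linarith
  -- unbalanced agents
  let bad : (Fin N → SignType) → Fin n → Prop := fun y i => W i < V i 1 y ∨ W i < V i (-1) y
  have bad_neg : ∀ y i, bad (-y) i ↔ bad y i := by
    intro y i
    simp only [bad, Vneg, neg_neg]
    exact or_comm
  let B : (Fin N → SignType) → Finset (Fin n) := fun y => univ.filter (bad y)
  have B_neg : ∀ y, B (-y) = B y := by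
    intro y; simp only [B, bad_neg]
  let A : Bool → (Fin N → SignType) → ℕ := fun e y => mt e (ext y) N
  let code : (Fin N → SignType) → ℕ := fun y =>
    if h : (B y).Nonempty then
      2 * ((B y).min' h).val + (if W ((B y).min' h) < V ((B y).min' h) 1 y then 1 else 0)
    else 2 * (n + max (A true y) (A false y) - 1) + (if A false y < A true y then 1 else 0)
  have A_neg : ∀ e y, A e (-y) = A (!e) y := by
    intro e y
    simp only [A, ext_neg]
    have := mt_neg (!e) (ext y) N
    rw [Bool.not_not] at this
    exact this
  have A_ne : ∀ y, y ≠ 0 → A true y ≠ A false y := by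
    intro y hy
    rcases mt_two (ext y) N with ⟨_, _, h⟩ | ⟨_, h⟩
    · exfalso; apply hy
      funext c
      have := h c.val c.isLt
      simpa [ext] using this
    · exact h
  have comp0 : ∀ m, comp (2 * m) = 2 * m + 1 := by
    intro m; simp [comp]
  have comp1 : ∀ m, comp (2 * m + 1) = 2 * m := by
    intro m; simp [comp]
  have hex : ∃ y, y ≠ 0 ∧ N - 1 ≤ code y / 2 := by
    by_contra hcon
    push Not at hcon
    have := tucker code (N - 1) ?_ ?_ hcon
    · omega
    · intro x hx
      simp only [code, B_neg]
      by_cases h : (B x).Nonempty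
      · simp only [h, dif_pos, Vneg]
        have hmem := (B x).min'_mem h
        set i := (B x).min' h
        have hs := Vsum i x
        simp only [B, bad, mem_filter, mem_univ, true_and] at hmem
        by_cases h1 : W i < V i 1 x
        · have h2 : ¬ W i < V i (-1) x := by linarith
          rw [if_pos h1, if_neg h2, comp1]; rfl
        · have h2 : W i < V i (-1) x := by tauto
          rw [if_neg h1, if_pos h2, add_zero, comp0]
      · simp only [h, dite_false, A_neg, Bool.not_true, Bool.not_false]
        rw [max_comm]
        have hne := A_ne x hx
        by_cases h1 : A false x < A true x
        · rw [if_pos h1, if_neg (by omega), comp1]; rfl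
        · rw [if_neg h1, if_pos (by omega), add_zero, comp0]
    · intro x y hx hxy
      by_cases h1 : (B x).Nonempty <;> by_cases h2 : (B y).Nonempty
      · simp only [code, h1, h2, dif_pos]
        have m1 := (B x).min'_mem h1
        have m2 := (B y).min'_mem h2
        generalize (B x).min' h1 = i at *
        generalize (B y).min' h2 = i' at *
        intro hd
        have hii : i = i' := by
          apply Fin.ext
          split_ifs at hd <;> omega
        subst hii
        simp only [B, bad, mem_filter, mem_univ, true_and] at m1 m2
        have hs1 := Vsum i y
        have hv1 := Vmono i 1 x y (by decide) hxy
        have hv2 := Vmono i (-1) x y (by decide) hxy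
        by_cases h3 : W i < V i 1 x
        · rw [if_pos h3, if_pos (h3.trans_le hv1)]
        · have h4 : W i < V i (-1) x := by tauto
          rw [if_neg h3, if_neg (by linarith)]
      · simp only [code, h1, h2, dif_pos, dite_false]
        intro hd
        exfalso
        have := ((B x).min' h1).isLt
        have := A_ne x hx
        have : y ≠ 0 := by
          rintro rfl
          apply hx
          funext c
          by_contra hc
          exact hc (hxy c hc).symm
        have := A_ne y this
        have : 0 < max (A true y) (A false y) := by omega
        split_ifs at hd <;> omega
      · simp only [code, h1, h2, dif_pos, dite_false]
        intro hd
        exfalso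
        have := ((B y).min' h2).isLt
        have := A_ne x hx
        have : 0 < max (A true x) (A false x) := by omega
        split_ifs at hd <;> omega
      · simp only [code, h1, h2, dite_false]
        intro hd
        have a1 : A true x ≤ A true y := le_trans (Nat.le_add_right _ _) (mt_mono true _ _ (ext_mono hxy) N)
        have a2 : A false x ≤ A false y := le_trans (Nat.le_add_right _ _) (mt_mono false _ _ (ext_mono hxy) N)
        have hn1 := A_ne x hx
        have hn2 : A true y ≠ A false y := by
          apply A_ne
          rintro rfl
          apply hx
          funext c
          by_contra hc
          exact hc (hxy c hc).symm
        clear_value A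
        generalize A true x = p at *
        generalize A false x = q at *
        generalize A true y = p' at *
        generalize A false y = q' at *
        clear * - hd a1 a2 hn1 hn2
        have hm : max p q = max p' q' := by
          have : 0 < max p q := by omega
          have : 0 < max p' q' := by omega
          split_ifs at hd <;> omega
        rw [hm]
        have : q < p ↔ q' < p' := by
          rcases le_total p q with h | h <;> rcases le_total p' q' with h' | h' <;>
            simp only [max_eq_left, max_eq_right, h, h'] at hm <;> omega
        simp only [this]
  obtain ⟨y, hy, hyc⟩ := hex
  have hB : ¬ (B y).Nonempty := by
    intro h
    simp only [code, h, dif_pos] at hyc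
    have := ((B y).min' h).isLt
    split_ifs at hyc <;> omega
  have hbal : ∀ i, V i 1 y ≤ W i ∧ V i (-1) y ≤ W i := by
    intro i
    rw [Finset.not_nonempty_iff_eq_empty] at hB
    have : i ∉ B y := by rw [hB]; simp
    simp only [B, bad, mem_filter, mem_univ, true_and] at this
    push Not at this
    exact this
  have hA : ∃ e, N ≤ n + A e y := by
    simp only [code, hB] at hyc
    have hne := A_ne y hy
    rcases le_total (A true y) (A false y) with h | h
    · refine ⟨false, ?_⟩
      rw [max_eq_right h] at hyc
      simp only [dite_false] at hyc
      split_ifs at hyc <;> omega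
    · refine ⟨true, ?_⟩
      rw [max_eq_left h] at hyc
      simp only [dite_false] at hyc
      split_ifs at hyc <;> omega
  obtain ⟨e, he⟩ := hA
  have hcard := mt_card e (ext y) N
  have hmis : #{i ∈ range N | ¬ ext y i = sg (st e (ext y) i)} ≤ n := by
    simp only [A] at he; omega
  refine ⟨st e (ext y), le_trans (Finset.card_le_card ?_) hmis, ?_⟩
  · intro j
    simp only [mem_filter]
    rintro ⟨h1, h2⟩
    refine ⟨h1, fun h3 => h2 ?_⟩
    simp only [st]
    rw [if_pos h3]
  · intro i
    have hd : ∑ j ∈ range N, (if ¬ ext y j = sg (st e (ext y) j) then w i j else 0) ≤ n * δ := by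
      rw [← Finset.sum_filter]
      refine (Finset.sum_le_card_nsmul _ _ δ (fun j _ => hδ i j)).trans ?_
      rw [nsmul_eq_mul]
      have hδ0 : 0 ≤ δ := (hw0 i 0).trans (hδ i 0)
      gcongr
    have key : ∀ b : Bool, ∑ j ∈ range N, (if st e (ext y) j = b then w i j else 0) ≤ W i + n * δ := by
      intro b
      have : ∑ j ∈ range N, (if st e (ext y) j = b then w i j else 0) ≤ V i (sg b) y +
          ∑ j ∈ range N, (if ¬ ext y j = sg (st e (ext y) j) then w i j else 0) := by
        simp only [V]
        rw [← Finset.sum_add_distrib]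
        apply Finset.sum_le_sum
        intro j _
        have := hw0 i j
        by_cases h1 : st e (ext y) j = b
        · by_cases h2 : ext y j = sg b
          · simp [h1, h2]
          · simp [h1, h2]
        · rw [if_neg h1]
          split_ifs <;> linarith
      have h3 : V i (sg b) y ≤ W i := by
        cases b
        · exact (hbal i).2
        · exact (hbal i).1
      linarith
    have h1 := key true
    have h2 := key false
    have h3 : ∑ j ∈ range N, (if st e (ext y) j = true then w i j else 0) +
      ∑ j ∈ range N, (if st e (ext y) j = false then w i j else 0) = 2 * W i := by
      simp only [W]
      rw [← Finset.sum_add_distrib, mul_div_cancel₀ _ (by norm_num)]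
      apply Finset.sum_congr rfl
      intro j _
      cases st e (ext y) j <;> simp
    rw [abs_le]
    simp only [W] at *
    constructor <;> linarith

lemma bd_split (N : ℕ) (a b : ℕ → Bool) :
    #{j ∈ range N | (a (j + 1) && b (j + 1)) ≠ (a j && b j)} +
    #{j ∈ range N | (a (j + 1) && !b (j + 1)) ≠ (a j && !b j)} ≤
    #{j ∈ range N | a (j + 1) ≠ a j} + 2 * #{j ∈ range N | b (j + 1) ≠ b j} := by
  simp only [Finset.card_filter]
  rw [Finset.mul_sum, ← Finset.sum_add_distrib, ← Finset.sum_add_distrib]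
  apply Finset.sum_le_sum
  intro j _
  rcases Bool.eq_false_or_eq_true (a j) with h1 | h1 <;>
  rcases Bool.eq_false_or_eq_true (b j) with h2 | h2 <;>
  rcases Bool.eq_false_or_eq_true (a (j + 1)) with h3 | h3 <;>
  rcases Bool.eq_false_or_eq_true (b (j + 1)) with h4 | h4 <;>
  simp [h1, h2, h3, h4]

theorem approx (n N : ℕ) (hn : 1 ≤ n) (hnN : n < N) (w : Fin n → ℕ → ℝ) (hw0 : ∀ i j, 0 ≤ w i j)
    (δ : ℝ) (hδ : ∀ i j, w i j ≤ δ) (hw1 : ∀ i, ∑ j ∈ range N, w i j = 1) (d : ℕ) :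
    ∀ α ∈ Set.Icc (0 : ℝ) 1, ∃ a : ℕ → Bool, #{j ∈ range N | a (j + 1) ≠ a j} ≤ 2 * n - 1 ∧
      ∀ i, |∑ j ∈ range N, (if a j then w i j else 0) - α| ≤ (1 / 2) ^ d + 2 * (n * δ) := by
  have hδ0 : 0 ≤ δ := (hw0 ⟨0, hn⟩ 0).trans (hδ _ _)
  have hnδ : 0 ≤ n * δ := by positivity
  induction d with
  | zero =>
    intro α hα
    refine ⟨fun _ => false, by simp, fun i => ?_⟩
    have : |(0:ℝ) - α| ≤ 1 := by rw [abs_le]; constructor <;> linarith [hα.1, hα.2]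
    simp at this ⊢
    linarith
  | succ d ih =>
    have half : ∀ α ∈ Set.Icc (0 : ℝ) (1 / 2), ∃ a : ℕ → Bool,
        #{j ∈ range N | a (j + 1) ≠ a j} ≤ 2 * n - 1 ∧
        ∀ i, |∑ j ∈ range N, (if a j then w i j else 0) - α| ≤ (1 / 2) ^ (d + 1) + 2 * (n * δ) := by
      intro α hα
      obtain ⟨a, ha, hai⟩ := ih (2 * α) ⟨by linarith [hα.1], by linarith [hα.2]⟩
      obtain ⟨b, hb, hbi⟩ := halving n N hnN (fun i j => if a j then w i j else 0)
        (fun i j => by split_ifs; exacts [hw0 i j, le_rfl]) δ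
        (fun i j => by split_ifs; exacts [hδ i j, hδ0])
      have hs := bd_split N a b
      have hsum : ∀ i, ∑ j ∈ range N, (if (a j && b j) then w i j else 0) +
          ∑ j ∈ range N, (if (a j && !b j) then w i j else 0)
          = ∑ j ∈ range N, (if a j then w i j else 0) := by
        intro i
        rw [← Finset.sum_add_distrib]
        apply Finset.sum_congr rfl
        intro j _
        rcases Bool.eq_false_or_eq_true (a j) with h1 | h1 <;>
        rcases Bool.eq_false_or_eq_true (b j) with h2 | h2 <;> simp [h1, h2]
      have hbi' : ∀ i, |∑ j ∈ range N, (if (a j && b j) then w i j else 0) -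
          (∑ j ∈ range N, (if a j then w i j else 0)) / 2| ≤ n * δ := by
        intro i
        convert hbi i using 4
        rename_i j _
        rcases Bool.eq_false_or_eq_true (a j) with h1 | h1 <;>
        rcases Bool.eq_false_or_eq_true (b j) with h2 | h2 <;> simp [h1, h2]
      have hcase : #{j ∈ range N | (a (j + 1) && b (j + 1)) ≠ (a j && b j)} ≤ 2 * n - 1 ∨
        #{j ∈ range N | (a (j + 1) && !b (j + 1)) ≠ (a j && !b j)} ≤ 2 * n - 1 := by omega
      rcases hcase with h | h
      · refine ⟨fun j => a j && b j, h, fun i => ?_⟩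
        have h1 := hbi' i
        have h2 := hai i
        rw [abs_le] at h1 h2 ⊢
        rw [pow_succ]
        constructor <;> linarith
      · refine ⟨fun j => a j && !b j, h, fun i => ?_⟩
        have h1 := hbi' i
        have h2 := hai i
        have h3 := hsum i
        rw [abs_le] at h1 h2 ⊢
        rw [pow_succ]
        constructor <;> linarith
    intro α hα
    rcases le_total α (1 / 2) with h | h
    · exact half α ⟨hα.1, h⟩
    · obtain ⟨a, ha, hai⟩ := half (1 - α) ⟨by linarith [hα.2], by linarith⟩
      refine ⟨fun j => ! a j, ?_, fun i => ?_⟩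
      · refine le_trans (le_of_eq ?_) ha
        congr 1
        ext j
        simp
      · have h1 := hai i
        have h2 : ∑ j ∈ range N, (if a j then w i j else 0) +
          ∑ j ∈ range N, (if !a j then w i j else 0) = 1 := by
          rw [← hw1 i, ← Finset.sum_add_distrib]
          apply Finset.sum_congr rfl
          intro j _
          rcases Bool.eq_false_or_eq_true (a j) with h1 | h1 <;> simp [h1]
        rw [abs_le] at h1 ⊢
        constructor <;> linarith

/-- number of changes up to `j`, starting from `false` -/
def cc (a : ℕ → Bool) (j : ℕ) : ℕ := (a 0).toNat + #{l ∈ range j | a (l + 1) ≠ a l}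

lemma cc_mono (a : ℕ → Bool) : Monotone (cc a) := by
  intro i j h
  unfold cc
  gcongr

lemma cc_odd (a : ℕ → Bool) (j : ℕ) : (cc a j).bodd = a j := by
  induction j with
  | zero => simp [cc]; cases a 0 <;> rfl
  | succ j ih =>
    unfold cc at *
    rw [Finset.range_add_one, Finset.filter_insert]
    split_ifs with h
    · rw [Finset.card_insert_of_notMem (by simp), ← add_assoc, Nat.bodd_succ, ih]
      revert h; cases a j <;> cases a (j + 1) <;> simp
    · rw [ih]; push Not at h; exact h.symm

/-- initial segment -/
lemma seg (c : ℕ → ℕ) (hc : Monotone c) (N r : ℕ) :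
    {j ∈ range N | c j ≤ r} = range #{j ∈ range N | c j ≤ r} := by
  induction N with
  | zero => simp
  | succ N ih =>
    by_cases h : c N ≤ r
    · have : {j ∈ range (N + 1) | c j ≤ r} = range (N + 1) := by
        ext j; simp only [mem_filter, mem_range, and_iff_left_iff_imp]
        intro hj; exact (hc (by omega)).trans h
      rw [this, card_range]
    · rw [Finset.range_add_one, Finset.filter_insert, if_neg h]
      exact ih

theorem to_intervals (n N : ℕ) (hn : 1 ≤ n) (a : ℕ → Bool)
    (ha : #{j ∈ range N | a (j + 1) ≠ a j} ≤ 2 * n - 1) :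
    ∃ t : ℕ → ℕ, Monotone t ∧ (∀ r, t r ≤ N) ∧ ∀ w : ℕ → ℝ,
      ∑ j ∈ range N, (if a j then w j else 0) =
      ∑ r ∈ range n, (∑ j ∈ range (t (2 * r + 1)), w j - ∑ j ∈ range (t (2 * r)), w j) := by
  refine ⟨fun r => #{j ∈ range N | cc a j ≤ r}, ?_, ?_, ?_⟩
  · intro r s h
    apply Finset.card_le_card
    intro j
    simp only [mem_filter]
    rintro ⟨h1, h2⟩
    exact ⟨h1, h2.trans h⟩
  · intro r
    exact (Finset.card_filter_le _ _).trans (by simp)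
  · intro w
    simp only [← seg (cc a) (cc_mono a) N]
    simp only [Finset.sum_filter, ← Finset.sum_sub_distrib]
    rw [Finset.sum_comm]
    apply Finset.sum_congr rfl
    intro j hj
    have hle : cc a j ≤ 2 * n := by
      refine (cc_mono a (mem_range.1 hj).le).trans ?_
      unfold cc
      have : (a 0).toNat ≤ 1 := Bool.toNat_le _
      omega
    have h1 : ∀ r, (if cc a j ≤ 2 * r + 1 then w j else 0) - (if cc a j ≤ 2 * r then w j else 0)
        = if cc a j = 2 * r + 1 then w j else 0 := by
      intro r
      split_ifs <;> first | omega | simp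
    simp only [h1]
    have hodd := cc_odd a j
    have hb := Nat.bodd_add_div2 (cc a j)
    rw [hodd, Nat.div2_val] at hb
    rcases Bool.eq_false_or_eq_true (a j) with h | h
    · rw [h] at hb
      simp only [h, if_true]
      simp at hb
      rw [Finset.sum_eq_single (cc a j / 2)]
      · rw [if_pos (by omega)]
      · intro r _ hr
        rw [if_neg (by omega)]
      · intro hr
        exfalso; apply hr; rw [mem_range]; omega
    · rw [h] at hb
      simp at hb
      rw [Finset.sum_eq_zero]
      · simp [h]
      · intro r _
        rw [if_neg (by omega)]

/-- ordered families of `n` intervals in `[0,1]` -/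
def K (n : ℕ) : Set ((Fin n → ℝ) × (Fin n → ℝ)) :=
  {p | (∀ j, 0 ≤ p.1 j ∧ p.1 j ≤ p.2 j ∧ p.2 j ≤ 1) ∧ ∀ i j, i < j → p.2 i ≤ p.1 j}

lemma K_compact (n : ℕ) : IsCompact (K n) := by
  have hc : IsClosed (K n) := by
    have : K n = (⋂ j, {p | 0 ≤ p.1 j} ∩ {p | p.1 j ≤ p.2 j} ∩ {p | p.2 j ≤ 1}) ∩
        ⋂ i, ⋂ j, {p | i < j → p.2 i ≤ p.1 j} := by
      ext p; simp [K, and_assoc]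
    rw [this]
    refine IsClosed.inter (isClosed_iInter fun j => ?_) (isClosed_iInter fun i => isClosed_iInter fun j => ?_)
    · exact ((isClosed_le (by fun_prop) (by fun_prop)).inter (isClosed_le (by fun_prop) (by fun_prop))).inter
        (isClosed_le (by fun_prop) (by fun_prop))
    · by_cases h : i < j
      · simp only [h, forall_const]
        exact isClosed_le (by fun_prop) (by fun_prop)
      · simp [h]
  have hcpt : IsCompact ((Set.univ.pi fun _ : Fin n => Set.Icc (0:ℝ) 1) ×ˢ
      (Set.univ.pi fun _ : Fin n => Set.Icc (0:ℝ) 1)) :=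
    (isCompact_univ_pi fun _ => isCompact_Icc).prod (isCompact_univ_pi fun _ => isCompact_Icc)
  refine hcpt.of_isClosed_subset hc ?_
  rintro p ⟨hp, -⟩
  refine ⟨fun j _ => ⟨(hp j).1, (hp j).2.1.trans (hp j).2.2⟩,
    fun j _ => ⟨(hp j).1.trans (hp j).2.1, (hp j).2.2⟩⟩

theorem approx_cont (n : ℕ) (hn : 1 ≤ n) (G : Fin n → ℝ → ℝ) (hG : ∀ i, Continuous (G i))
    (hmono : ∀ i, Monotone (G i)) (h0 : ∀ i, G i 0 = 0) (h1 : ∀ i, G i 1 = 1) (α : ℝ)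
    (hα : α ∈ Set.Icc (0 : ℝ) 1) (ε : ℝ) (hε : 0 < ε) :
    ∃ p ∈ K n, ∀ i, |∑ j, (G i (p.2 j) - G i (p.1 j)) - α| ≤ ε := by
  have hn0 : (0:ℝ) < n := by exact_mod_cast hn
  set δ := ε / (4 * n) with hδdef
  have hδ : 0 < δ := by positivity
  have huc : ∀ i, ∃ η > 0, ∀ x ∈ Set.Icc (0:ℝ) 1, ∀ y ∈ Set.Icc (0:ℝ) 1, dist x y < η →
      dist (G i x) (G i y) < δ := by
    intro i
    exact Metric.uniformContinuousOn_iff.1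
      (isCompact_Icc.uniformContinuousOn_of_continuous (hG i).continuousOn) δ hδ
  choose η hη hη2 using huc
  obtain ⟨N, hN⟩ : ∃ N : ℕ, n < N ∧ ∀ i, 1 / (N : ℝ) < η i := by
    have h1 : ∀ i, ∀ᶠ N : ℕ in Filter.atTop, 1 / (N : ℝ) < η i := fun i =>
      (tendsto_one_div_atTop_nhds_zero_nat (𝕜 := ℝ)).eventually_lt_const (hη i)
    have := ((Filter.eventually_gt_atTop n).and (Filter.eventually_all.2 h1)).exists
    exact this
  have hN0 : (0:ℝ) < N := by exact_mod_cast (by omega : 0 < N)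
  obtain ⟨d, hd⟩ : ∃ d : ℕ, (1 / 2 : ℝ) ^ d < ε / 2 :=
    exists_pow_lt_of_lt_one (by positivity) (by norm_num)
  let x : ℕ → ℝ := fun j => min ((j : ℝ) / N) 1
  have hx0 : x 0 = 0 := by simp [x]
  have hxN : x N = 1 := by simp [x, hN0.ne']
  have hxm : Monotone x := by
    intro i j h
    simp only [x]
    gcongr
  have hx01 : ∀ j, x j ∈ Set.Icc (0:ℝ) 1 := fun j =>
    ⟨le_min (by positivity) zero_le_one, min_le_right _ _⟩
  have hxd : ∀ j, x (j + 1) - x j ≤ 1 / N := by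
    intro j
    simp only [x]
    have e1 : ((j + 1 : ℕ) : ℝ) / N = j / N + 1 / N := by push_cast; ring
    have e2 : (0:ℝ) < 1 / N := by positivity
    rw [e1]
    rcases le_total ((j:ℝ) / N) 1 with h | h
    · rw [min_eq_left h]
      linarith [min_le_left ((j:ℝ) / N + 1 / N) 1]
    · rw [min_eq_right h]
      linarith [min_le_right ((j:ℝ) / N + 1 / N) 1]
  let w : Fin n → ℕ → ℝ := fun i j => G i (x (j + 1)) - G i (x j)
  have hwsum : ∀ i m, ∑ j ∈ range m, w i j = G i (x m) := by
    intro i m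
    simp only [w]
    rw [Finset.sum_range_sub (fun j => G i (x j)), hx0, h0, sub_zero]
  obtain ⟨a, ha, hai⟩ := approx n N hn hN.1 w
    (fun i j => sub_nonneg.2 (hmono i (hxm (Nat.le_succ j)))) δ
    (fun i j => by
      have := hη2 i (x (j + 1)) (hx01 _) (x j) (hx01 _) (by
        rw [Real.dist_eq, abs_of_nonneg (sub_nonneg.2 (hxm (Nat.le_succ j)))]
        exact (hxd j).trans_lt (hN.2 i))
      rw [Real.dist_eq] at this
      exact (le_abs_self _).trans this.le)
    (fun i => by rw [hwsum, hxN, h1]) d α hα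
  obtain ⟨t, htm, htN, ht⟩ := to_intervals n N hn a ha
  refine ⟨(fun j => x (t (2 * j)), fun j => x (t (2 * j + 1))), ⟨fun j => ⟨(hx01 _).1, hxm (htm (by omega)), (hx01 _).2⟩,
    fun i j hij => hxm (htm ?_)⟩, fun i => ?_⟩
  · have : i.val < j.val := hij
    omega
  · have h2 := hai i
    rw [ht (w i)] at h2
    simp only [hwsum] at h2
    rw [← Fin.sum_univ_eq_sum_range (fun r => G i (x (t (2 * r + 1))) - G i (x (t (2 * r)))) n] at h2
    refine h2.trans ?_
    have : 2 * ((n:ℝ) * δ) = ε / 2 := by rw [hδdef]; field_simp; ring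
    linarith

theorem exact_cont (n : ℕ) (hn : 1 ≤ n) (G : Fin n → ℝ → ℝ) (hG : ∀ i, Continuous (G i))
    (hmono : ∀ i, Monotone (G i)) (h0 : ∀ i, G i 0 = 0) (h1 : ∀ i, G i 1 = 1) (α : ℝ)
    (hα : α ∈ Set.Icc (0 : ℝ) 1) :
    ∃ p ∈ K n, ∀ i, ∑ j, (G i (p.2 j) - G i (p.1 j)) = α := by
  let Φ : (Fin n → ℝ) × (Fin n → ℝ) → ℝ := fun p => ∑ i, |∑ j, (G i (p.2 j) - G i (p.1 j)) - α|
  have hΦ : Continuous Φ := by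
    have := hG
    fun_prop
  have hap := approx_cont n hn G hG hmono h0 h1 α hα
  obtain ⟨q, hq, -⟩ := hap 1 one_pos
  obtain ⟨p, hp, hmin⟩ := (K_compact n).exists_isMinOn ⟨q, hq⟩ hΦ.continuousOn
  have hn0 : (0:ℝ) < n := by exact_mod_cast hn
  have hle : Φ p ≤ 0 := by
    apply le_of_forall_pos_le_add
    intro ε hε
    obtain ⟨r, hr, hri⟩ := hap (ε / n) (by positivity)
    have h2 : Φ p ≤ Φ r := hmin hr
    have h3 : Φ r ≤ ∑ _i : Fin n, ε / n := Finset.sum_le_sum fun i _ => hri i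
    have h4 : ∑ _i : Fin n, ε / n = ε := by
      rw [Finset.sum_const, Finset.card_univ, Fintype.card_fin, nsmul_eq_mul]; field_simp
    linarith
  refine ⟨p, hp, fun i => ?_⟩
  have h5 : |∑ j, (G i (p.2 j) - G i (p.1 j)) - α| ≤ Φ p :=
    Finset.single_le_sum (f := fun i => |∑ j, (G i (p.2 j) - G i (p.1 j)) - α|)
      (fun i _ => abs_nonneg _) (Finset.mem_univ i)
  have h6 := abs_nonneg (∑ j, (G i (p.2 j) - G i (p.1 j)) - α)
  exact sub_eq_zero.1 (abs_eq_zero.1 (le_antisymm (h5.trans hle) h6))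

end SW

open MeasureTheory

/-- Stromquist–Woodall: Let `n ≥ 2` agents have normalized nonnegative
integrable densities over the cake `[0,1]`. For every `α ∈ [0,1]` there is a subset of
`[0,1]` that is a union of at most `n` intervals and is valued exactly `α` by every agent. -/
theorem stromquist_woodall
    (n : ℕ) (hn : 2 ≤ n)
    (f : Fin n → ℝ → ℝ)
    (hf_nonneg : ∀ i x, 0 ≤ f i x)
    (hf_int : ∀ i, IntegrableOn (f i) (Set.Icc (0 : ℝ) 1))
    (hf_norm : ∀ i, (∫ x in Set.Icc (0 : ℝ) 1, f i x) = 1)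
    (α : ℝ) (hα : α ∈ Set.Icc (0 : ℝ) 1) :
    ∃ (k : ℕ) (a b : Fin k → ℝ),
      k ≤ n ∧
      (⋃ j, Set.Icc (a j) (b j)) ⊆ Set.Icc (0 : ℝ) 1 ∧
      ∀ i, (∫ x in (⋃ j, Set.Icc (a j) (b j)), f i x) = α := by
  let g : Fin n → ℝ → ℝ := fun i => (Set.Icc (0 : ℝ) 1).indicator (f i)
  have hg : ∀ i, Integrable (g i) := fun i => (hf_int i).integrable_indicator measurableSet_Icc
  have hg0 : ∀ i x, 0 ≤ g i x := fun i x => Set.indicator_nonneg (fun y _ => hf_nonneg i y) x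
  let G : Fin n → ℝ → ℝ := fun i t => ∫ x in (0:ℝ)..t, g i x
  have hGsub : ∀ i s t, G i t - G i s = ∫ x in s..t, g i x := fun i s t =>
    intervalIntegral.integral_interval_sub_left (hg i).intervalIntegrable (hg i).intervalIntegrable
  have hgf : ∀ i s t, 0 ≤ s → s ≤ t → t ≤ 1 → ∫ x in s..t, g i x = ∫ x in Set.Icc s t, f i x := by
    intro i s t hs hst ht
    rw [intervalIntegral.integral_of_le hst, ← integral_Icc_eq_integral_Ioc]
    apply setIntegral_congr_fun measurableSet_Icc
    intro x hx
    have hx' : x ∈ Set.Icc (0:ℝ) 1 := ⟨hs.trans hx.1, hx.2.trans ht⟩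
    exact Set.indicator_of_mem hx' (f i)
  obtain ⟨p, ⟨hp1, hp2⟩, hp⟩ := SW.exact_cont n (by omega) G
    (fun i => intervalIntegral.continuous_primitive (fun a b => (hg i).intervalIntegrable) 0)
    (fun i s t hst => by
      have := hGsub i s t
      have h2 := intervalIntegral.integral_nonneg (μ := volume) hst (fun x _ => hg0 i x)
      linarith)
    (fun i => by simp [G])
    (fun i => by
      simp only [G]
      rw [hgf i 0 1 le_rfl zero_le_one le_rfl, hf_norm]) α hα
  have hsub : (⋃ j, Set.Icc (p.1 j) (p.2 j)) ⊆ Set.Icc (0 : ℝ) 1 := by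
    apply Set.iUnion_subset
    intro j x hx
    exact ⟨(hp1 j).1.trans hx.1, hx.2.trans (hp1 j).2.2⟩
  refine ⟨n, p.1, p.2, le_rfl, hsub, fun i => ?_⟩
  have hdis : ∀ i j, i < j → AEDisjoint volume (Set.Icc (p.1 i) (p.2 i)) (Set.Icc (p.1 j) (p.2 j)) := by
    intro i j hij
    have : Set.Icc (p.1 i) (p.2 i) ∩ Set.Icc (p.1 j) (p.2 j) ⊆ {p.2 i} := by
      rintro x ⟨hx1, hx2⟩
      exact le_antisymm hx1.2 ((hp2 i j hij).trans hx2.1)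
    exact measure_mono_null this (by simp)
  rw [integral_iUnion_ae (fun j => measurableSet_Icc.nullMeasurableSet) ?_ ((hf_int i).mono_set hsub),
    tsum_fintype]
  · rw [← hp i]
    apply Finset.sum_congr rfl
    intro j _
    rw [hGsub, hgf i _ _ (hp1 j).1 (hp1 j).2.1 (hp1 j).2.2]
  · intro j l hjl
    rcases lt_or_gt_of_ne hjl with h | h
    · exact hdis j l h
    · exact (hdis l j h).symm
end
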